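/- Rectifiability of the singular set: the singular set Σ = {x ∈ Ω : A_x admits more than one minimizer on D_0^{1,2}(1,+∞)} is countably H^{d(N−1)−1}-rectifiable; that is, there exist a set E ⊂ X with H^{d(N−1)−1}(E) = 0 and countably many Lipschitz maps f_i : ℝ^{d(N−1)−1} → X such that Σ ⊆ E ∪ ⋃_{i∈ℕ} f_i(ℝ^{d(N−1)−1}). -/

import Mathlib

open MeasureTheory Real Set Filter Topology
open scoped RealInnerProductSpace ENNReal

noncomputable section
namespace NBodyHJ

attribute [local instance] Classical.propDecidable

abbrev Conf (d N : ℕ) := Fin N → EuclideanSpace ℝ (Fin d)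

variable {d N : ℕ}

/-- The mass inner product on the configuration space. -/
def minner (m : Fin N → ℝ) (x y : Conf d N) : ℝ := ∑ i, m i * ⟪x i, y i⟫

/-- The mass norm on the configuration space. -/
def mnorm (m : Fin N → ℝ) (x : Conf d N) : ℝ := Real.sqrt (minner m x x)

/-- Membership in the zero-barycenter configuration space `X`. -/
def inX (m : Fin N → ℝ) (x : Conf d N) : Prop := ∑ i, m i • x i = 0

/-- Collision configurations. -/
def collision (x : Conf d N) : Prop := ∃ i j, i ≠ j ∧ x i = x j

/-- Membership in the collision-free zero-barycenter space `Ω`. -/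
def inOmega (m : Fin N → ℝ) (x : Conf d N) : Prop := inX m x ∧ ¬ collision x

/-- The Newtonian potential (with junk value `0` for a colliding pair). -/
def U (m : Fin N → ℝ) (x : Conf d N) : ℝ :=
  ∑ i : Fin N, ∑ j : Fin N, if i < j then m i * m j / ‖x i - x j‖ else 0

/-- The time interval `(t₀, T)`, where `T ∈ (t₀, +∞]` is extended-real. -/
def timeSet (t0 : ℝ) (T : EReal) : Set ℝ := {t : ℝ | t0 < t ∧ (t : EReal) < T}

/-- Membership of the pair (curve, derivative) `(φ, φ')` in `D₀^{1,2}(t₀, T)`: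
`φ` starts at `0`, takes values in `X`, is the integral of `φ'` (hence locally
absolutely continuous), and `φ'` has finite `L²` mass norm on `(t₀, T)`. -/
def InD (m : Fin N → ℝ) (t0 : ℝ) (T : EReal) (φ φ' : ℝ → Conf d N) : Prop :=
  φ t0 = 0 ∧
  (∀ t : ℝ, t0 ≤ t → (t : EReal) < T → inX m (φ t)) ∧
  (∀ t : ℝ, t0 ≤ t → (t : EReal) < T → φ t = ∫ s in Set.Ioc t0 t, φ' s) ∧
  (∀ t : ℝ, t0 ≤ t → (t : EReal) < T → IntegrableOn φ' (Set.Ioc t0 t)) ∧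
  IntegrableOn (fun t => (mnorm m (φ' t)) ^ 2) (timeSet t0 T)

/-- The norm `‖φ‖_{D_T}`. -/
def Dnorm (m : Fin N → ℝ) (t0 : ℝ) (T : EReal) (φ' : ℝ → Conf d N) : ℝ :=
  Real.sqrt (∫ t in timeSet t0 T, (mnorm m (φ' t)) ^ 2)

/-- The motion `γ(t) = φ(t) + t a + x - a` associated with `φ` in the hyperbolic case. -/
def hypCurve (a x : Conf d N) (φ : ℝ → Conf d N) (t : ℝ) : Conf d N :=
  φ t + t • a + x - a

/-- The integrand of the hyperbolic renormalized Lagrangian action. -/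
def hypIntegrand (m : Fin N → ℝ) (a x : Conf d N) (φ φ' : ℝ → Conf d N) (t : ℝ) : ℝ :=
  (mnorm m (φ' t)) ^ 2 / 2 + U m (hypCurve a x φ t) - U m (t • a)

/-- The hyperbolic renormalized Lagrangian action `A_{x,[1,T]}(φ)`, with values in
`ℝ ∪ {+∞}` : it equals the integral of the renormalized Lagrangian if this integrand is
integrable and the motion is a.e. collision-free, and `+∞` otherwise. -/
def hypAction (m : Fin N → ℝ) (a x : Conf d N) (T : EReal) (φ φ' : ℝ → Conf d N) : EReal :=
  if IntegrableOn (hypIntegrand m a x φ φ') (timeSet 1 T) ∧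
      (∀ᵐ t ∂volume.restrict (timeSet 1 T), ¬ collision (hypCurve a x φ t))
  then ((∫ t in timeSet 1 T, hypIntegrand m a x φ φ' t : ℝ) : EReal)
  else (⊤ : EReal)

/-- The infimum of the hyperbolic renormalized action over `D₀^{1,2}(1,T)`. -/
def hypInf (m : Fin N → ℝ) (a x : Conf d N) (T : EReal) : EReal :=
  ⨅ (φ : ℝ → Conf d N) (φ' : ℝ → Conf d N) (_ : InD m 1 T φ φ'), hypAction m a x T φ φ'

/-- The renormalized value function `v(x)` in the hyperbolic case. -/
def hypValue (m : Fin N → ℝ) (a x : Conf d N) : ℝ :=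
  (hypInf m a x ⊤).toReal - minner m a x

/-- The singular set `Σ` : the set of `x ∈ Ω` for which the renormalized action `A_x`
admits (at least) two minimizers on `D₀^{1,2}(1,+∞)` that differ somewhere on `[1,∞)`. -/
def singularSet (m : Fin N → ℝ) (a : Conf d N) : Set (Conf d N) :=
  {x | inOmega m x ∧ ∃ φ₁ φ₁' φ₂ φ₂' : ℝ → Conf d N,
    InD m 1 ⊤ φ₁ φ₁' ∧ InD m 1 ⊤ φ₂ φ₂' ∧
    hypAction m a x ⊤ φ₁ φ₁' = hypInf m a x ⊤ ∧
    hypAction m a x ⊤ φ₂ φ₂' = hypInf m a x ⊤ ∧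
    ∃ t : ℝ, 1 ≤ t ∧ φ₁ t ≠ φ₂ t}

section CauchyLaw

lemma lintegral_gaussian {b : ℝ} (hb : 0 < b) :
    ∫⁻ t : ℝ, ENNReal.ofReal (exp (-b * t ^ 2)) = ENNReal.ofReal √(π / b) := by
  rw [← integral_gaussian, ofReal_integral_eq_lintegral_ofReal (integrable_exp_neg_mul_sq hb)]
  exact ae_of_all _ fun _ => (exp_pos _).le

lemma inv_norm_eq_lintegral {F : Type*} [NormedAddCommGroup F] [NormedSpace ℝ F]
    {q : ℝ} (hq : 0 < q) (y : F) :
    (ENNReal.ofReal ‖y‖)⁻¹ = ENNReal.ofReal (q / √π) *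
      ∫⁻ t : ℝ, ENNReal.ofReal (exp (-(t ^ 2 * ‖q • y‖ ^ 2))) := by
  have hpi : 0 < √π := by positivity
  rcases eq_or_ne y 0 with rfl | hy
  · simp only [norm_zero, ENNReal.ofReal_zero, ENNReal.inv_zero, smul_zero, ne_eq, OfNat.ofNat_ne_zero,
      not_false_eq_true, zero_pow, mul_zero, neg_zero, exp_zero, ENNReal.ofReal_one,
      lintegral_const, Real.volume_univ, one_mul]
    rw [ENNReal.mul_top]
    simpa using div_pos hq hpi
  · have hy' : 0 < ‖y‖ := norm_pos_iff.2 hy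
    have hb : 0 < ‖q • y‖ ^ 2 := by
      rw [norm_smul, Real.norm_of_nonneg hq.le]; positivity
    have : ∀ t : ℝ, -(t ^ 2 * ‖q • y‖ ^ 2) = -(‖q • y‖ ^ 2) * t ^ 2 := fun t => by ring
    simp_rw [this]
    rw [lintegral_gaussian hb, ← ENNReal.ofReal_mul (by positivity),
      ← ENNReal.ofReal_inv_of_pos hy', Real.sqrt_div (by positivity), Real.sqrt_sq (norm_nonneg _),
      norm_smul, Real.norm_of_nonneg hq.le]
    congr 1
    field_simp

variable {F : Type*} [NormedAddCommGroup F] [InnerProductSpace ℝ F] [FiniteDimensional ℝ F]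
  [MeasurableSpace F] [BorelSpace F]

lemma lintegral_gaussian_norm {b : ℝ} (hb : 0 < b) :
    ∫⁻ v : F, ENNReal.ofReal (exp (-b * ‖v‖ ^ 2)) =
      ENNReal.ofReal ((π / b) ^ (Module.finrank ℝ F / 2 : ℝ)) := by
  rw [← GaussianFourier.integral_rexp_neg_mul_sq_norm hb, ofReal_integral_eq_lintegral_ofReal]
  · by_contra h
    have h0 := integral_undef h
    rw [GaussianFourier.integral_rexp_neg_mul_sq_norm hb] at h0
    have : 0 < (π / b) ^ (Module.finrank ℝ F / 2 : ℝ) := by positivity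
    linarith
  · exact ae_of_all _ fun _ => (exp_pos _).le

/-- The centred Gaussian law with density proportional to `exp (-‖g‖²)`. -/
def gaussLaw (F : Type*) [NormedAddCommGroup F] [InnerProductSpace ℝ F] [FiniteDimensional ℝ F]
    [MeasurableSpace F] [BorelSpace F] : Measure F :=
  volume.withDensity fun g =>
    ENNReal.ofReal (π ^ (-(Module.finrank ℝ F / 2 : ℝ)) * exp (-‖g‖ ^ 2))

lemma lintegral_gaussLaw (f : F → ℝ≥0∞) (hf : Measurable f) :
    ∫⁻ g, f g ∂(gaussLaw F) = ENNReal.ofReal (π ^ (-(Module.finrank ℝ F / 2 : ℝ))) *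
      ∫⁻ g, ENNReal.ofReal (exp (-‖g‖ ^ 2)) * f g := by
  rw [gaussLaw, lintegral_withDensity_eq_lintegral_mul _ (by fun_prop) hf,
    ← lintegral_const_mul _ (by fun_prop)]
  refine lintegral_congr fun g => ?_
  rw [Pi.mul_apply, ENNReal.ofReal_mul (by positivity), mul_assoc]

lemma gaussLaw_univ : gaussLaw F univ = 1 := by
  have h := lintegral_gaussLaw (F := F) (fun _ => 1) measurable_const
  have h2 := lintegral_gaussian_norm (F := F) one_pos
  simp only [lintegral_const, one_mul, mul_one] at h
  rw [h]
  have : ∀ g : F, -‖g‖ ^ 2 = -1 * ‖g‖ ^ 2 := fun g => by ring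
  simp_rw [this, h2, div_one]
  rw [← ENNReal.ofReal_mul (by positivity), ← Real.rpow_add Real.pi_pos]
  simp

instance : IsProbabilityMeasure (gaussLaw F) := ⟨gaussLaw_univ⟩

lemma map_neg_gaussLaw : (gaussLaw F).map (fun g => -g) = gaussLaw F := by
  ext s hs
  rw [Measure.map_apply measurable_neg hs, gaussLaw, withDensity_apply _ hs,
    withDensity_apply _ (measurable_neg hs), ← lintegral_indicator hs,
    ← lintegral_indicator (measurable_neg hs)]
  conv_rhs => rw [← lintegral_neg_eq_self]
  refine lintegral_congr fun g => ?_
  simp only [indicator, norm_neg]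
  rfl

lemma lintegral_sq_gaussLaw_lt_top : ∫⁻ g, ENNReal.ofReal (‖g‖ ^ 2) ∂(gaussLaw F) < ⊤ := by
  rw [lintegral_gaussLaw _ (by fun_prop)]
  refine ENNReal.mul_lt_top ENNReal.ofReal_lt_top ?_
  have h := lintegral_gaussian_norm (F := F) (b := 1 / 2) (by norm_num)
  calc ∫⁻ g : F, ENNReal.ofReal (exp (-‖g‖ ^ 2)) * ENNReal.ofReal (‖g‖ ^ 2)
      ≤ ∫⁻ g : F, 2 * ENNReal.ofReal (exp (-(1 / 2) * ‖g‖ ^ 2)) := by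
        refine lintegral_mono fun g => ?_
        rw [← ENNReal.ofReal_mul (exp_pos _).le, show (2 : ℝ≥0∞) = ENNReal.ofReal 2 by simp,
          ← ENNReal.ofReal_mul (by norm_num)]
        refine ENNReal.ofReal_le_ofReal ?_
        have h1 := Real.add_one_le_exp (‖g‖ ^ 2 / 2)
        have h2 : exp (-(1 / 2) * ‖g‖ ^ 2) = exp (-‖g‖ ^ 2) * exp (‖g‖ ^ 2 / 2) := by
          rw [← Real.exp_add]; congr 1; ring
        rw [h2]
        nlinarith [exp_pos (-‖g‖ ^ 2)]
    _ = 2 * ∫⁻ g : F, ENNReal.ofReal (exp (-(1 / 2) * ‖g‖ ^ 2)) :=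
        lintegral_const_mul _ (by fun_prop)
    _ < ⊤ := by
        rw [h]; exact ENNReal.mul_lt_top (by simp) ENNReal.ofReal_lt_top

lemma lintegral_gaussian_gaussLaw_le (hF : 2 ≤ Module.finrank ℝ F) (t : ℝ) (v : F) :
    ∫⁻ g, ENNReal.ofReal (exp (-(t ^ 2 * ‖v + g‖ ^ 2))) ∂(gaussLaw F) ≤
      ENNReal.ofReal ((1 + t ^ 2)⁻¹ * exp (-(t ^ 2 / (1 + t ^ 2) * ‖v‖ ^ 2))) := by
  have h1 : 0 < 1 + t ^ 2 := by positivity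
  rw [lintegral_gaussLaw _ (by fun_prop)]
  set w : F := (t ^ 2 / (1 + t ^ 2)) • v with hw
  have key : ∀ g : F, ENNReal.ofReal (exp (-‖g‖ ^ 2)) *
      ENNReal.ofReal (exp (-(t ^ 2 * ‖v + g‖ ^ 2))) =
      ENNReal.ofReal (exp (-(t ^ 2 / (1 + t ^ 2) * ‖v‖ ^ 2))) *
        ENNReal.ofReal (exp (-(1 + t ^ 2) * ‖g + w‖ ^ 2)) := by
    intro g
    rw [← ENNReal.ofReal_mul (exp_pos _).le, ← ENNReal.ofReal_mul (exp_pos _).le,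
      ← Real.exp_add, ← Real.exp_add]
    congr 2
    rw [norm_add_sq_real, norm_add_sq_real, hw, norm_smul, inner_smul_right,
      real_inner_comm v g, mul_pow, Real.norm_eq_abs, sq_abs]
    field_simp
    ring
  simp_rw [key]
  rw [lintegral_const_mul _ (by fun_prop),
    lintegral_add_right_eq_self (fun g : F => ENNReal.ofReal (exp (-(1 + t ^ 2) * ‖g‖ ^ 2))) w,
    lintegral_gaussian_norm h1, ← ENNReal.ofReal_mul (exp_pos _).le,
    ← ENNReal.ofReal_mul (by positivity)]
  refine ENNReal.ofReal_le_ofReal ?_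
  rw [Real.div_rpow pi_pos.le h1.le, Real.rpow_neg pi_pos.le]
  have h2 : (1 + t ^ 2) ≤ (1 + t ^ 2) ^ (Module.finrank ℝ F / 2 : ℝ) := by
    refine Real.self_le_rpow_of_one_le (by nlinarith [sq_nonneg t]) ?_
    have : (2 : ℝ) ≤ Module.finrank ℝ F := by exact_mod_cast hF
    linarith
  have h3 : 0 < π ^ (Module.finrank ℝ F / 2 : ℝ) := by positivity
  have h4 : ((1 + t ^ 2) ^ (Module.finrank ℝ F / 2 : ℝ))⁻¹ ≤ (1 + t ^ 2)⁻¹ := by gcongr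
  calc _ = ((1 + t ^ 2) ^ (Module.finrank ℝ F / 2 : ℝ))⁻¹ *
        exp (-(t ^ 2 / (1 + t ^ 2) * ‖v‖ ^ 2)) := by field_simp
    _ ≤ _ := by gcongr

/-- The half-normal law on `(0, ∞)`. -/
def halfNormal : Measure ℝ :=
  (volume.restrict (Ioi 0)).withDensity fun q => ENNReal.ofReal (2 / √π * exp (-q ^ 2))

lemma lintegral_halfNormal (f : ℝ → ℝ≥0∞) (hf : Measurable f) :
    ∫⁻ q, f q ∂halfNormal =
      ∫⁻ q in Ioi 0, ENNReal.ofReal (2 / √π * exp (-q ^ 2)) * f q := by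
  rw [halfNormal, lintegral_withDensity_eq_lintegral_mul _ (by fun_prop) hf]
  rfl

lemma halfNormal_univ : halfNormal univ = 1 := by
  have h : ∫ q in Ioi (0 : ℝ), exp (-1 * q ^ 2) = √(π / 1) / 2 := integral_gaussian_Ioi 1
  have h2 := ofReal_integral_eq_lintegral_ofReal
    (μ := volume.restrict (Ioi (0 : ℝ))) (f := fun q : ℝ => 2 / √π * exp (-1 * q ^ 2))
    (((integrable_exp_neg_mul_sq one_pos).const_mul _).integrableOn)
    (ae_of_all _ fun _ => by positivity)
  rw [integral_const_mul, h, div_one] at h2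
  rw [halfNormal, withDensity_apply _ MeasurableSet.univ, Measure.restrict_univ]
  simp_rw [neg_one_mul] at h2
  rw [← h2]
  have : 0 < √π := by positivity
  rw [show 2 / √π * (√π / 2) = 1 by field_simp]
  simp

instance : IsProbabilityMeasure halfNormal := ⟨halfNormal_univ⟩

lemma lintegral_id_mul_gaussian {A : ℝ} (hA : 0 < A) :
    ∫⁻ q in Ioi (0 : ℝ), ENNReal.ofReal (q * exp (-A * q ^ 2)) = ENNReal.ofReal (1 / (2 * A)) := by
  have hd : ∀ q ∈ Ici (0 : ℝ), HasDerivAt (fun q : ℝ => -(1 / (2 * A)) * exp (-A * q ^ 2))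
      (q * exp (-A * q ^ 2)) q := by
    intro q _
    have := (((hasDerivAt_pow 2 q).const_mul (-A)).exp).const_mul (-(1 / (2 * A)))
    refine this.congr_deriv ?_
    field_simp
    norm_num
  have hlim : Tendsto (fun q : ℝ => -(1 / (2 * A)) * exp (-A * q ^ 2)) atTop
      (𝓝 (-(1 / (2 * A)) * 0)) := by
    refine Tendsto.const_mul _ (Real.tendsto_exp_atBot.comp ?_)
    exact (tendsto_pow_atTop two_ne_zero).const_mul_atTop_of_neg (neg_neg_of_pos hA)
  have hnn : ∀ q ∈ Ioi (0 : ℝ), 0 ≤ q * exp (-A * q ^ 2) := fun q hq =>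
    mul_nonneg (le_of_lt hq) (exp_pos _).le
  have hi := integrableOn_Ioi_deriv_of_nonneg' hd hnn hlim
  have h := integral_Ioi_of_hasDerivAt_of_nonneg' hd hnn hlim
  rw [← ofReal_integral_eq_lintegral_ofReal hi
    ((ae_restrict_iff' measurableSet_Ioi).2 (ae_of_all _ hnn)), h]
  simp

lemma lintegral_inv_one_add_mul_sq {k : ℝ} (hk : 0 < k) :
    ∫⁻ t : ℝ, ENNReal.ofReal ((1 + k * t ^ 2)⁻¹) = ENNReal.ofReal (π / √k) := by
  have hs : 0 < √k := by positivity
  have h1 : ∀ t : ℝ, (1 + k * t ^ 2)⁻¹ = (1 + (√k * t) ^ 2)⁻¹ := fun t => by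
    rw [mul_pow, Real.sq_sqrt hk.le]
  simp_rw [h1]
  rw [← ofReal_integral_eq_lintegral_ofReal (integrable_inv_one_add_sq.comp_mul_left' hs.ne')
    (ae_of_all _ fun _ => by positivity),
    Measure.integral_comp_mul_left (fun t : ℝ => (1 + t ^ 2)⁻¹), integral_univ_inv_one_add_sq]
  rw [abs_of_pos (by positivity), smul_eq_mul, inv_mul_eq_div]

/-- The Newtonian kernel averaged over the Cauchy law is at most the Newtonian kernel
at height one above the plane. -/
lemma lintegral_inv_norm_cauchy_le (hF : 2 ≤ Module.finrank ℝ F) (x : F) :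
    ∫⁻ q, ∫⁻ g, (ENNReal.ofReal ‖x + q⁻¹ • g‖)⁻¹ ∂(gaussLaw F) ∂halfNormal ≤
      (ENNReal.ofReal √(‖x‖ ^ 2 + 1))⁻¹ := by
  have hpi : 0 < √π := by positivity
  have hk : 0 < 1 + ‖x‖ ^ 2 := by positivity
  have meas : Measurable fun q : ℝ => ∫⁻ g, (ENNReal.ofReal ‖x + q⁻¹ • g‖)⁻¹ ∂(gaussLaw F) := by
    refine Measurable.lintegral_prod_right' (f := fun z : ℝ × F =>
      (ENNReal.ofReal ‖x + z.1⁻¹ • z.2‖)⁻¹) ?_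
    fun_prop
  rw [lintegral_halfNormal _ meas]
  have step : ∀ q ∈ Ioi (0 : ℝ), ENNReal.ofReal (2 / √π * exp (-q ^ 2)) *
      ∫⁻ g, (ENNReal.ofReal ‖x + q⁻¹ • g‖)⁻¹ ∂(gaussLaw F) ≤
      ∫⁻ t : ℝ, ENNReal.ofReal (2 / π * (1 + t ^ 2)⁻¹) *
        ENNReal.ofReal (q * exp (-(1 + t ^ 2 / (1 + t ^ 2) * ‖x‖ ^ 2) * q ^ 2)) := by
    intro q hq
    have hq : 0 < q := hq
    have e1 : ∀ g : F, (ENNReal.ofReal ‖x + q⁻¹ • g‖)⁻¹ = ENNReal.ofReal (q / √π) *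
        ∫⁻ t : ℝ, ENNReal.ofReal (exp (-(t ^ 2 * ‖q • x + g‖ ^ 2))) := by
      intro g
      rw [inv_norm_eq_lintegral hq, smul_add, smul_inv_smul₀ hq.ne']
    simp_rw [e1]
    rw [lintegral_const_mul _ (by
      refine Measurable.lintegral_prod_right' (f := fun z : F × ℝ =>
        ENNReal.ofReal (exp (-(z.2 ^ 2 * ‖q • x + z.1‖ ^ 2)))) ?_
      fun_prop), lintegral_lintegral_swap (by fun_prop), ← mul_assoc,
      ← ENNReal.ofReal_mul (by positivity), ← lintegral_const_mul _ (by
      refine Measurable.lintegral_prod_right' (f := fun z : ℝ × F =>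
        ENNReal.ofReal (exp (-(z.1 ^ 2 * ‖q • x + z.2‖ ^ 2)))) ?_
      fun_prop)]
    refine lintegral_mono fun t => ?_
    refine (mul_le_mul_right (lintegral_gaussian_gaussLaw_le hF t (q • x)) _).trans (le_of_eq ?_)
    rw [← ENNReal.ofReal_mul (by positivity), ← ENNReal.ofReal_mul (by positivity)]
    congr 1
    rw [norm_smul, Real.norm_of_nonneg hq.le]
    have : exp (-(1 + t ^ 2 / (1 + t ^ 2) * ‖x‖ ^ 2) * q ^ 2) =
        exp (-q ^ 2) * exp (-(t ^ 2 / (1 + t ^ 2) * (q * ‖x‖) ^ 2)) := by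
      rw [← Real.exp_add]; congr 1; ring
    rw [this]
    have hpp : √π * √π = π := Real.mul_self_sqrt pi_pos.le
    field_simp
    rw [Real.sq_sqrt pi_pos.le]
  refine (setLIntegral_mono' measurableSet_Ioi step).trans ?_
  rw [lintegral_lintegral_swap (by fun_prop)]
  have inner : ∀ t : ℝ, ∫⁻ q in Ioi (0 : ℝ), ENNReal.ofReal (2 / π * (1 + t ^ 2)⁻¹) *
        ENNReal.ofReal (q * exp (-(1 + t ^ 2 / (1 + t ^ 2) * ‖x‖ ^ 2) * q ^ 2)) =
      ENNReal.ofReal (1 / π) * ENNReal.ofReal ((1 + (1 + ‖x‖ ^ 2) * t ^ 2)⁻¹) := by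
    intro t
    rw [lintegral_const_mul _ (by fun_prop), lintegral_id_mul_gaussian (by positivity),
      ← ENNReal.ofReal_mul (by positivity), ← ENNReal.ofReal_mul (by positivity)]
    congr 1
    field_simp
    ring
  simp_rw [inner]
  rw [lintegral_const_mul _ (by fun_prop), lintegral_inv_one_add_mul_sq hk,
    ← ENNReal.ofReal_mul (by positivity), ← ENNReal.ofReal_inv_of_pos (by positivity)]
  refine ENNReal.ofReal_le_ofReal (le_of_eq ?_)
  rw [add_comm (‖x‖ ^ 2)]
  field_simp

lemma halfNormal_Iio_le (z : ℝ) : halfNormal (Iio z) ≤ ENNReal.ofReal (2 / √π * z) := by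
  rw [halfNormal, withDensity_apply _ measurableSet_Iio, Measure.restrict_restrict measurableSet_Iio]
  calc _ ≤ ∫⁻ _ in Iio z ∩ Ioi 0, ENNReal.ofReal (2 / √π) := by
        refine lintegral_mono fun q => ENNReal.ofReal_le_ofReal ?_
        have : exp (-q ^ 2) ≤ 1 := Real.exp_le_one_iff.2 (by nlinarith [sq_nonneg q])
        have h2 : 0 ≤ 2 / √π := by positivity
        nlinarith
    _ = _ := by
        rw [setLIntegral_const, inter_comm, Ioi_inter_Iio, Real.volume_Ioo, sub_zero,
          ← ENNReal.ofReal_mul (by positivity)]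

lemma setLIntegral_inv_sq_halfNormal_le {z : ℝ} (hz : 0 < z) :
    ∫⁻ q in Ici z, ENNReal.ofReal ((q ^ 2)⁻¹) ∂halfNormal ≤ ENNReal.ofReal (2 / √π * z⁻¹) := by
  have hint : IntegrableOn (fun q : ℝ => q ^ (-2 : ℝ)) (Ioi z) :=
    integrableOn_Ioi_rpow_of_lt (by norm_num) hz
  have hval := integral_Ioi_rpow_of_lt (a := -2) (by norm_num) hz
  have hpi : 0 < √π := by positivity
  rw [← lintegral_indicator measurableSet_Ici, lintegral_halfNormal _ (by
    exact Measurable.indicator (by fun_prop) measurableSet_Ici)]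
  calc _ ≤ ∫⁻ q, (Ici z).indicator (fun q => ENNReal.ofReal (2 / √π * q ^ (-2 : ℝ))) q := by
        refine (lintegral_mono fun q => ?_).trans (setLIntegral_le_lintegral _ _)
        by_cases hq : q ∈ Ici z
        · have hq0 : 0 < q := hz.trans_le hq
          rw [indicator_of_mem hq, indicator_of_mem hq, ← ENNReal.ofReal_mul (by positivity)]
          refine ENNReal.ofReal_le_ofReal ?_
          rw [Real.rpow_neg hq0.le, Real.rpow_two]
          have : exp (-q ^ 2) ≤ 1 := Real.exp_le_one_iff.2 (by nlinarith [sq_nonneg q])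
          have h2 : 0 ≤ 2 / √π := by positivity
          gcongr
          nlinarith
        · simp [indicator_of_notMem hq]
    _ = ENNReal.ofReal (2 / √π * z⁻¹) := by
        rw [lintegral_indicator measurableSet_Ici, setLIntegral_congr Ioi_ae_eq_Ici.symm,
          ← ofReal_integral_eq_lintegral_ofReal (hint.const_mul _)
          ((ae_restrict_iff' measurableSet_Ioi).2 (ae_of_all _ fun q hq => by
            have : 0 < q := hz.trans hq
            positivity)), integral_const_mul, hval]
        congr 2
        norm_num
        exact Real.rpow_neg_one z

/-- Truncated Cauchy laws: symmetric sub-probability laws at scale `z` whose mass defect and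
second moment are `O(z)` and which smooth the Newtonian kernel at scale `z`. -/
lemma exists_smoothing_law (hF : 2 ≤ Module.finrank ℝ F) :
    ∃ C : ℝ≥0∞, C ≠ ⊤ ∧ ∀ z : ℝ, 0 < z → ∃ ν : Measure F,
      ν univ ≤ 1 ∧ 1 ≤ ν univ + C * ENNReal.ofReal z ∧
      (∀ f : F → ℝ≥0∞, Measurable f → ∫⁻ s, f (-s) ∂ν = ∫⁻ s, f s ∂ν) ∧
      ∫⁻ s, ENNReal.ofReal (‖s‖ ^ 2) ∂ν ≤ C * ENNReal.ofReal z ∧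
      ∀ (x : F) (h : ℝ), 0 ≤ h → ∫⁻ s, (ENNReal.ofReal ‖x + h • s‖)⁻¹ ∂ν ≤
        (ENNReal.ofReal √(‖x‖ ^ 2 + (h * z) ^ 2))⁻¹ := by
  set G := ∫⁻ g, ENNReal.ofReal (‖g‖ ^ 2) ∂(gaussLaw F) with hG
  have hGtop : G ≠ ⊤ := lintegral_sq_gaussLaw_lt_top.ne
  have hpi : 0 < √π := by positivity
  refine ⟨ENNReal.ofReal (2 / √π) * (1 + G), ENNReal.mul_ne_top ENNReal.ofReal_ne_top
    (by simp [hGtop]), fun z hz => ?_⟩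
  have hmap : Measurable fun p : ℝ × F => (z * p.1⁻¹) • p.2 := by fun_prop
  have hmapneg : MeasurePreserving (fun g : F => -g) (gaussLaw F) (gaussLaw F) :=
    ⟨measurable_neg, map_neg_gaussLaw⟩
  have huniv : (((halfNormal.restrict (Ici z)).prod (gaussLaw F)).map
      fun p : ℝ × F => (z * p.1⁻¹) • p.2) univ = halfNormal (Ici z) := by
    rw [Measure.map_apply hmap MeasurableSet.univ, preimage_univ, ← univ_prod_univ,
      Measure.prod_prod, gaussLaw_univ, mul_one, Measure.restrict_apply_univ]
  have hlint : ∀ f : F → ℝ≥0∞, Measurable f →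
      ∫⁻ s, f s ∂(((halfNormal.restrict (Ici z)).prod (gaussLaw F)).map
        fun p : ℝ × F => (z * p.1⁻¹) • p.2) =
      ∫⁻ q in Ici z, ∫⁻ g, f ((z * q⁻¹) • g) ∂(gaussLaw F) ∂halfNormal := by
    intro f hf
    rw [lintegral_map hf hmap, lintegral_prod _ (by fun_prop)]
  refine ⟨((halfNormal.restrict (Ici z)).prod (gaussLaw F)).map
    fun p : ℝ × F => (z * p.1⁻¹) • p.2, ?_, ?_, ?_, ?_, ?_⟩
  · rw [huniv]
    exact prob_le_one
  · rw [huniv]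
    calc (1 : ℝ≥0∞) = halfNormal (Ici z ∪ Iio z) := by
          rw [union_comm, Iio_union_Ici, halfNormal_univ]
      _ ≤ halfNormal (Ici z) + halfNormal (Iio z) := measure_union_le _ _
      _ ≤ _ := by
        gcongr
        refine (halfNormal_Iio_le z).trans ?_
        rw [ENNReal.ofReal_mul (by positivity)]
        gcongr
        exact le_mul_of_one_le_right' (by simp)
  · intro f hf
    rw [hlint _ (by fun_prop), hlint _ hf]
    refine lintegral_congr fun q => ?_
    have := hmapneg.lintegral_comp (f := fun g => f ((z * q⁻¹) • g)) (by fun_prop)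
    simpa using this
  · rw [hlint _ (by fun_prop)]
    have e : ∀ q : ℝ, ∫⁻ g, ENNReal.ofReal (‖(z * q⁻¹) • g‖ ^ 2) ∂(gaussLaw F) =
        ENNReal.ofReal (z ^ 2) * G * ENNReal.ofReal ((q ^ 2)⁻¹) := by
      intro q
      have : ∀ g : F, ENNReal.ofReal (‖(z * q⁻¹) • g‖ ^ 2) =
          ENNReal.ofReal (z ^ 2 * (q ^ 2)⁻¹) * ENNReal.ofReal (‖g‖ ^ 2) := by
        intro g
        rw [← ENNReal.ofReal_mul (by positivity), norm_smul, Real.norm_eq_abs, mul_pow, sq_abs,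
          mul_pow, inv_pow]
      simp_rw [this]
      rw [lintegral_const_mul _ (by fun_prop), ENNReal.ofReal_mul (by positivity), ← hG]
      ring
    simp_rw [e]
    rw [lintegral_const_mul _ (by fun_prop)]
    calc _ ≤ ENNReal.ofReal (z ^ 2) * G * ENNReal.ofReal (2 / √π * z⁻¹) := by
          gcongr
          exact setLIntegral_inv_sq_halfNormal_le hz
      _ = ENNReal.ofReal (2 / √π) * G * ENNReal.ofReal z := by
          rw [mul_assoc, mul_comm G, ← mul_assoc, ← ENNReal.ofReal_mul (by positivity),
            mul_right_comm, ← ENNReal.ofReal_mul (by positivity)]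
          congr 2
          field_simp
      _ ≤ _ := by
          gcongr
          exact le_add_self
  · intro x h hh
    rw [hlint _ (by fun_prop)]
    rcases hh.eq_or_lt with rfl | hh
    · simp only [zero_smul, add_zero, zero_mul, ne_eq, OfNat.ofNat_ne_zero, not_false_eq_true,
        zero_pow, Real.sqrt_sq (norm_nonneg x), lintegral_const, measure_univ, mul_one,
        Measure.restrict_apply_univ]
      exact mul_le_of_le_one_right' prob_le_one
    · have hc : 0 < h * z := by positivity
      have hscale : ∀ y : F, (ENNReal.ofReal ‖(h * z) • y‖)⁻¹ =
          ENNReal.ofReal (h * z)⁻¹ * (ENNReal.ofReal ‖y‖)⁻¹ := by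
        intro y
        rw [norm_smul, Real.norm_of_nonneg hc.le, ENNReal.ofReal_mul hc.le,
          ENNReal.mul_inv (by left; simpa using hc) (by left; simp),
          ENNReal.ofReal_inv_of_pos hc]
      have e : ∀ (q : ℝ) (g : F), x + h • (z * q⁻¹) • g =
          (h * z) • ((h * z)⁻¹ • x + q⁻¹ • g) := by
        intro q g
        rw [smul_add, smul_inv_smul₀ hc.ne', smul_smul, smul_smul, mul_assoc]
      simp_rw [e, hscale]
      have m1 : Measurable fun q : ℝ =>
          ∫⁻ g, (ENNReal.ofReal ‖(h * z)⁻¹ • x + q⁻¹ • g‖)⁻¹ ∂(gaussLaw F) := by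
        refine Measurable.lintegral_prod_right' (f := fun p : ℝ × F =>
          (ENNReal.ofReal ‖(h * z)⁻¹ • x + p.1⁻¹ • p.2‖)⁻¹) ?_
        fun_prop
      have e2 : ∀ q : ℝ, ∫⁻ g, ENNReal.ofReal (h * z)⁻¹ *
          (ENNReal.ofReal ‖(h * z)⁻¹ • x + q⁻¹ • g‖)⁻¹ ∂(gaussLaw F) =
          ENNReal.ofReal (h * z)⁻¹ *
          ∫⁻ g, (ENNReal.ofReal ‖(h * z)⁻¹ • x + q⁻¹ • g‖)⁻¹ ∂(gaussLaw F) := fun q =>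
        lintegral_const_mul _ (by fun_prop)
      simp_rw [e2]
      rw [lintegral_const_mul _ m1]
      calc _ ≤ ENNReal.ofReal (h * z)⁻¹ * (ENNReal.ofReal √(‖(h * z)⁻¹ • x‖ ^ 2 + 1))⁻¹ := by
            gcongr
            exact (setLIntegral_le_lintegral _ _).trans (lintegral_inv_norm_cauchy_le hF _)
        _ = _ := by
            rw [← ENNReal.ofReal_inv_of_pos (by positivity),
              ← ENNReal.ofReal_inv_of_pos (by positivity), ← ENNReal.ofReal_mul (by positivity),
              ← mul_inv]
            congr 2
            rw [norm_smul, norm_inv, Real.norm_of_nonneg hc.le]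
            nth_rw 1 [← Real.sqrt_sq hc.le]
            rw [← Real.sqrt_mul (by positivity)]
            congr 1
            field_simp

end CauchyLaw

section Rectifiability

/-- Covered by countably many Lipschitz images of `ℝ^k`. -/
def LipCovered {E : Type*} [PseudoMetricSpace E] (k : ℕ) (S : Set E) : Prop :=
  ∃ f : ℕ → EuclideanSpace ℝ (Fin k) → E,
    (∀ i, ∃ K : NNReal, LipschitzWith K (f i)) ∧ S ⊆ ⋃ i, range (f i)

lemma LipCovered.mono {E : Type*} [PseudoMetricSpace E] {k : ℕ} {S S' : Set E}
    (h : LipCovered k S) (hS : S' ⊆ S) : LipCovered k S' :=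
  let ⟨f, hf, hs⟩ := h
  ⟨f, hf, hS.trans hs⟩

lemma LipCovered.of_subset_range {E : Type*} [PseudoMetricSpace E] {k : ℕ} {S : Set E}
    {f : EuclideanSpace ℝ (Fin k) → E} {K : NNReal} (hf : LipschitzWith K f) (hS : S ⊆ range f) :
    LipCovered k S :=
  ⟨fun _ => f, fun _ => ⟨K, hf⟩, by simpa [iUnion_const] using hS⟩

lemma LipCovered.image {E E' : Type*} [PseudoMetricSpace E] [PseudoMetricSpace E'] {k : ℕ}
    {S : Set E} (h : LipCovered k S) {g : E → E'} {K : NNReal} (hg : LipschitzWith K g) :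
    LipCovered k (g '' S) := by
  obtain ⟨f, hf, hs⟩ := h
  refine ⟨fun i => g ∘ f i, fun i => ?_, ?_⟩
  · obtain ⟨K', hK'⟩ := hf i
    exact ⟨_, hg.comp hK'⟩
  · rintro _ ⟨x, hx, rfl⟩
    obtain ⟨i, y, rfl⟩ := mem_iUnion.1 (hs hx)
    exact mem_iUnion.2 ⟨i, y, rfl⟩

lemma LipCovered.iUnion {E : Type*} [PseudoMetricSpace E] {k : ℕ} {ι : Type*} [Countable ι]
    [Nonempty ι] {S : ι → Set E} (h : ∀ i, LipCovered k (S i)) : LipCovered k (⋃ i, S i) := by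
  choose f hf hs using h
  obtain ⟨e, he⟩ := exists_surjective_nat (ι × ℕ)
  refine ⟨fun n => f (e n).1 (e n).2, fun n => hf _ _, ?_⟩
  refine iUnion_subset fun i x hx => ?_
  obtain ⟨j, hj⟩ := mem_iUnion.1 (hs i hx)
  obtain ⟨n, hn⟩ := he (i, j)
  exact mem_iUnion.2 ⟨n, by simpa [hn] using hj⟩

lemma LipCovered.union {E : Type*} [PseudoMetricSpace E] {k : ℕ} {S S' : Set E}
    (h : LipCovered k S) (h' : LipCovered k S') : LipCovered k (S ∪ S') := by
  rw [union_eq_iUnion]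
  exact LipCovered.iUnion fun b => by cases b <;> assumption

/-- A finite-dimensional subspace of dimension at most `k` is a Lipschitz image of `ℝ^k`. -/
lemma lipCovered_submodule {E : Type*} [NormedAddCommGroup E] [NormedSpace ℝ E]
    (W : Submodule ℝ E) [FiniteDimensional ℝ W] {k : ℕ} (hW : Module.finrank ℝ W ≤ k) :
    LipCovered k (W : Set E) := by
  obtain ⟨f, hf⟩ : ∃ f : EuclideanSpace ℝ (Fin k) →ₗ[ℝ] W, Function.Surjective f := by
    obtain ⟨i, hi⟩ := (finrank_le_iff_exists_linearMap (R := ℝ) (M := W)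
      (M' := EuclideanSpace ℝ (Fin k))).1 (by simpa using hW)
    obtain ⟨f, hf⟩ := i.exists_leftInverse_of_injective (LinearMap.ker_eq_bot.2 hi)
    exact ⟨f, fun y => ⟨i y, LinearMap.congr_fun hf y⟩⟩
  let g : EuclideanSpace ℝ (Fin k) →L[ℝ] E := W.subtypeL.comp (LinearMap.toContinuousLinearMap f)
  refine LipCovered.of_subset_range (f := g) g.lipschitz fun x hx => ?_
  obtain ⟨y, hy⟩ := hf ⟨x, hx⟩
  exact ⟨y, by simp [g, hy]⟩

/-- A set satisfying a cone condition around a hyperplane is covered by a Lipschitz graph. -/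
lemma lipCovered_of_cone {E : Type*} [NormedAddCommGroup E] [InnerProductSpace ℝ E]
    {k : ℕ} (hk : Module.finrank ℝ E = k + 1) {S : Set E} {Q : E} (hQ : Q ≠ 0)
    (hS : ∀ x ∈ S, ∀ y ∈ S, |⟪Q, y - x⟫| ≤ ‖Q‖ / 2 * ‖y - x‖) : LipCovered k S := by
  have : Fact (Module.finrank ℝ E = k + 1) := ⟨hk⟩
  have : FiniteDimensional ℝ E := Module.finite_of_finrank_eq_succ hk
  let B := OrthonormalBasis.fromOrthogonalSpanSingleton k (𝕜 := ℝ) hQ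
  let W : Submodule ℝ E := (ℝ ∙ Q)ᗮ
  let pr : E → EuclideanSpace ℝ (Fin k) := fun x => B.repr (W.orthogonalProjectionOnto x)
  have hexp : ∀ x ∈ S, ∀ y ∈ S, ‖y - x‖ ≤ 2 * ‖pr y - pr x‖ := by
    intro x hx y hy
    have h1 : ‖pr y - pr x‖ = ‖W.orthogonalProjectionOnto (y - x)‖ := by
      simp only [pr]
      rw [← map_sub, LinearIsometryEquiv.norm_map, map_sub]
    have h2 : ‖y - x‖ ^ 2 = ‖(ℝ ∙ Q).orthogonalProjectionOnto (y - x)‖ ^ 2 +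
        ‖W.orthogonalProjectionOnto (y - x)‖ ^ 2 :=
      Submodule.norm_sq_eq_add_norm_sq_projection (y - x) (ℝ ∙ Q)
    have h3 : ‖(ℝ ∙ Q).orthogonalProjectionOnto (y - x)‖ = |⟪Q, y - x⟫| / ‖Q‖ := by
      rw [Submodule.coe_norm, Submodule.coe_orthogonalProjectionOnto_apply,
        Submodule.starProjection_singleton, norm_smul, norm_div]
      have : 0 < ‖Q‖ := norm_pos_iff.2 hQ
      simp
      field_simp
    have hQ' : 0 < ‖Q‖ := norm_pos_iff.2 hQ
    have h4 : ‖(ℝ ∙ Q).orthogonalProjectionOnto (y - x)‖ ≤ ‖y - x‖ / 2 := by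
      rw [h3, div_le_iff₀ hQ']
      have := hS x hx y hy
      linarith
    rw [h1]
    nlinarith [norm_nonneg (y - x), norm_nonneg (W.orthogonalProjectionOnto (y - x)),
      norm_nonneg ((ℝ ∙ Q).orthogonalProjectionOnto (y - x))]
  have hinj : InjOn pr S := by
    intro x hx y hy hxy
    have := hexp x hx y hy
    rw [hxy, sub_self, norm_zero, mul_zero] at this
    exact (sub_eq_zero.1 (norm_le_zero_iff.1 this)).symm
  have hlip : LipschitzOnWith 2 (Function.invFunOn pr S) (pr '' S) := by
    refine LipschitzOnWith.of_dist_le_mul ?_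
    rintro _ ⟨x, hx, rfl⟩ _ ⟨y, hy, rfl⟩
    rw [hinj.leftInvOn_invFunOn hx, hinj.leftInvOn_invFunOn hy, dist_eq_norm, dist_eq_norm]
    exact hexp y hy x hx
  obtain ⟨g, hg, hgS⟩ := hlip.extend_finite_dimension
  refine LipCovered.of_subset_range hg fun x hx => ⟨pr x, ?_⟩
  rw [← hgS (mem_image_of_mem pr hx), hinj.leftInvOn_invFunOn hx]

/-- Points at which a function has two distinct superdifferentials form a countable union of
pieces of Lipschitz hypersurfaces. -/
lemma lipCovered_of_two_superdifferentials {E : Type*} [NormedAddCommGroup E]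
    [InnerProductSpace ℝ E] {k : ℕ} (hk : Module.finrank ℝ E = k + 1) {S : Set E} (V : E → ℝ)
    (hS : ∀ x ∈ S, ∃ p₁ p₂ : E, p₁ ≠ p₂ ∧ ∀ ε > 0, ∃ r > 0, ∀ y ∈ S, ‖y - x‖ < r →
      V y ≤ V x + ⟪p₁, y - x⟫ + ε * ‖y - x‖ ∧ V y ≤ V x + ⟪p₂, y - x⟫ + ε * ‖y - x‖) :
    LipCovered k S := by
  have : FiniteDimensional ℝ E := Module.finite_of_finrank_eq_succ hk
  have : ProperSpace E := FiniteDimensional.proper_real E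
  let D := TopologicalSpace.denseSeq E
  let ι := ℕ × ℕ × ℕ × ℕ
  let P : ι → Set E := fun α => {x | x ∈ S ∧ D α.1 ≠ D α.2.1 ∧
    ‖x - D α.2.2.1‖ < 1 / (α.2.2.2 + 1 : ℝ) / 2 ∧
    ∀ y ∈ S, ‖y - x‖ < 1 / (α.2.2.2 + 1 : ℝ) →
      V y ≤ V x + ⟪D α.1, y - x⟫ + ‖D α.1 - D α.2.1‖ / 4 * ‖y - x‖ ∧
      V y ≤ V x + ⟪D α.2.1, y - x⟫ + ‖D α.1 - D α.2.1‖ / 4 * ‖y - x‖}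
  have hcover : S ⊆ ⋃ α, P α := by
    intro x hx
    obtain ⟨p₁, p₂, hp, h⟩ := hS x hx
    set δ := ‖p₁ - p₂‖ with hδ
    have hδ0 : 0 < δ := norm_pos_iff.2 (sub_ne_zero.2 hp)
    obtain ⟨i, hi⟩ := (TopologicalSpace.denseRange_denseSeq E).exists_dist_lt p₁
      (show 0 < δ / 16 by positivity)
    obtain ⟨j, hj⟩ := (TopologicalSpace.denseRange_denseSeq E).exists_dist_lt p₂
      (show 0 < δ / 16 by positivity)
    rw [dist_eq_norm] at hi hj
    obtain ⟨r, hr, hy⟩ := h (δ / 16) (by positivity)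
    obtain ⟨n, hn⟩ := exists_nat_one_div_lt hr
    obtain ⟨c, hc⟩ := (TopologicalSpace.denseRange_denseSeq E).exists_dist_lt x
      (show 0 < 1 / (n + 1 : ℝ) / 2 by positivity)
    rw [dist_eq_norm] at hc
    have hlow : δ * (7 / 8) ≤ ‖D i - D j‖ := by
      have : p₁ - p₂ = (D i - D j) + (p₁ - D i) - (p₂ - D j) := by abel
      have h2 : δ ≤ ‖D i - D j‖ + ‖p₁ - D i‖ + ‖p₂ - D j‖ := by
        rw [hδ, this]
        exact (norm_sub_le _ _).trans (by gcongr; exact norm_add_le _ _)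
      change ‖p₁ - D i‖ < _ at hi
      change ‖p₂ - D j‖ < _ at hj
      linarith
    refine mem_iUnion.2 ⟨(i, j, c, n), hx, ?_, hc, fun y hyS hyx => ?_⟩
    · intro hij
      change D i = D j at hij
      rw [hij, sub_self, norm_zero] at hlow
      linarith
    · obtain ⟨h1, h2⟩ := hy y hyS (hyx.trans hn)
      have e1 : ⟪p₁, y - x⟫ ≤ ⟪D i, y - x⟫ + δ / 16 * ‖y - x‖ := by
        have := (real_inner_le_norm (p₁ - D i) (y - x)).trans
          (mul_le_mul_of_nonneg_right hi.le (norm_nonneg _))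
        rw [inner_sub_left] at this
        linarith
      have e2 : ⟪p₂, y - x⟫ ≤ ⟪D j, y - x⟫ + δ / 16 * ‖y - x‖ := by
        have := (real_inner_le_norm (p₂ - D j) (y - x)).trans
          (mul_le_mul_of_nonneg_right hj.le (norm_nonneg _))
        rw [inner_sub_left] at this
        linarith
      have e3 := mul_le_mul_of_nonneg_right hlow (norm_nonneg (y - x))
      have e4 := mul_nonneg hδ0.le (norm_nonneg (y - x))
      constructor
      · change V y ≤ V x + ⟪D i, y - x⟫ + ‖D i - D j‖ / 4 * ‖y - x‖
        linarith
      · change V y ≤ V x + ⟪D j, y - x⟫ + ‖D i - D j‖ / 4 * ‖y - x‖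
        linarith
  refine (LipCovered.iUnion fun α => ?_).mono hcover
  by_cases hα : D α.1 = D α.2.1
  · refine (lipCovered_submodule (⊥ : Submodule ℝ E) (k := k) (by simp)).mono fun x hx => ?_
    exact absurd hα hx.2.1
  refine lipCovered_of_cone hk (sub_ne_zero.2 hα) fun x hx y hy => ?_
  have hxy : ‖y - x‖ < 1 / (α.2.2.2 + 1 : ℝ) := by
    have : y - x = (y - D α.2.2.1) - (x - D α.2.2.1) := by abel
    rw [this]
    refine (norm_sub_le _ _).trans_lt ?_
    linarith [hx.2.2.1, hy.2.2.1]
  have a1 := hx.2.2.2 y hy.1 hxy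
  have a2 := hy.2.2.2 x hx.1 (by rwa [norm_sub_rev])
  have e : ∀ p : E, ⟪p, x - y⟫ = -⟪p, y - x⟫ := fun p => by
    rw [← inner_neg_right, neg_sub]
  rw [norm_sub_rev x y, e, e] at a2
  rw [inner_sub_left, abs_le]
  constructor <;> linarith [a1.1, a1.2, a2.1, a2.2]

end Rectifiability

lemma timeSet_top (t : ℝ) : timeSet t ⊤ = Ioi t := by
  ext s; simp [timeSet, EReal.coe_lt_top]

section MassInner

variable (m : Fin N → ℝ)

lemma minner_add_left (x y z : Conf d N) : minner m (x + y) z = minner m x z + minner m y z := by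
  simp [minner, inner_add_left, mul_add, Finset.sum_add_distrib]

lemma minner_comm (x y : Conf d N) : minner m x y = minner m y x := by
  simp [minner, real_inner_comm]

lemma minner_add_right (x y z : Conf d N) : minner m x (y + z) = minner m x y + minner m x z := by
  rw [minner_comm, minner_add_left, minner_comm m y, minner_comm m z]

lemma minner_smul_left (c : ℝ) (x y : Conf d N) : minner m (c • x) y = c * minner m x y := by
  simp only [minner, Pi.smul_apply, real_inner_smul_left, Finset.mul_sum]
  exact Finset.sum_congr rfl fun i _ => by ring

lemma minner_smul_right (c : ℝ) (x y : Conf d N) : minner m x (c • y) = c * minner m x y := by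
  rw [minner_comm, minner_smul_left, minner_comm]

@[simp] lemma minner_zero_right (x : Conf d N) : minner m x 0 = 0 := by simp [minner]

lemma minner_neg_right (x y : Conf d N) : minner m x (-y) = -minner m x y := by
  simp [minner]

lemma minner_sub_right (x y z : Conf d N) : minner m x (y - z) = minner m x y - minner m x z := by
  rw [sub_eq_add_neg, minner_add_right, minner_neg_right, sub_eq_add_neg]

lemma minner_sub_left (x y z : Conf d N) : minner m (x - y) z = minner m x z - minner m y z := by
  rw [minner_comm, minner_sub_right, minner_comm m z, minner_comm m z]

lemma continuous_minner : Continuous fun p : Conf d N × Conf d N => minner m p.1 p.2 := by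
  unfold minner; fun_prop

variable {m}

lemma minner_self_nonneg (hm : ∀ i, 0 < m i) (x : Conf d N) : 0 ≤ minner m x x :=
  Finset.sum_nonneg fun i _ => mul_nonneg (hm i).le real_inner_self_nonneg

lemma mnorm_sq (hm : ∀ i, 0 < m i) (x : Conf d N) : mnorm m x ^ 2 = minner m x x :=
  Real.sq_sqrt (minner_self_nonneg hm x)

lemma abs_minner_le (hm : ∀ i, 0 < m i) (x y : Conf d N) :
    |minner m x y| ≤ (minner m x x + minner m y y) / 2 := by
  have h1 := minner_self_nonneg hm (x + y)
  have h2 := minner_self_nonneg hm (x - y)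
  simp only [minner_add_left, minner_add_right, minner_sub_left, minner_sub_right] at h1 h2
  rw [minner_comm m y x] at h1 h2
  rw [abs_le]; constructor <;> linarith

lemma mul_norm_sq_le_minner (hm : ∀ i, 0 < m i)
    (x : Conf d N) (i : Fin N) : m i * ‖x i‖ ^ 2 ≤ minner m x x := by
  rw [← real_inner_self_eq_norm_sq]
  exact Finset.single_le_sum (f := fun i => m i * ⟪x i, x i⟫)
    (fun i _ => mul_nonneg (hm i).le real_inner_self_nonneg) (Finset.mem_univ i)

lemma minner_self_le (hm : ∀ i, 0 < m i) (x : Conf d N) : minner m x x ≤ (∑ i, m i) * ‖x‖ ^ 2 := by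
  rw [Finset.sum_mul]
  refine Finset.sum_le_sum fun i _ => ?_
  rw [real_inner_self_eq_norm_sq]
  have := norm_le_pi_norm x i
  have := (hm i).le
  gcongr

lemma exists_norm_sq_le_minner (hm : ∀ i, 0 < m i) :
    ∃ c : ℝ, 0 < c ∧ ∀ x : Conf d N, ‖x‖ ^ 2 ≤ c * minner m x x := by
  have hsum : 0 ≤ ∑ i, (m i)⁻¹ := Finset.sum_nonneg fun i _ => (inv_pos.2 (hm i)).le
  refine ⟨1 + ∑ i, (m i)⁻¹, by positivity, fun x => ?_⟩
  have h0 := minner_self_nonneg hm x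
  have hc : 0 ≤ (1 + ∑ i, (m i)⁻¹) * minner m x x := by positivity
  rw [← Real.le_sqrt (norm_nonneg _) hc, pi_norm_le_iff_of_nonneg (Real.sqrt_nonneg _)]
  intro i
  rw [Real.le_sqrt (norm_nonneg _) hc]
  have h1 := mul_norm_sq_le_minner hm x i
  have h2 : ‖x i‖ ^ 2 ≤ (m i)⁻¹ * minner m x x := by
    rw [← div_eq_inv_mul, le_div_iff₀ (hm i)]; linarith
  refine h2.trans (mul_le_mul_of_nonneg_right ?_ h0)
  have := Finset.single_le_sum (f := fun i => (m i)⁻¹) (fun i _ => (inv_pos.2 (hm i)).le)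
    (Finset.mem_univ i)
  linarith

end MassInner

lemma inX.add {m : Fin N → ℝ} {x y : Conf d N} (hx : inX m x) (hy : inX m y) : inX m (x + y) := by
  unfold inX at *; simp [smul_add, Finset.sum_add_distrib, hx, hy]

lemma inX.smul {m : Fin N → ℝ} {x : Conf d N} (c : ℝ) (hx : inX m x) : inX m (c • x) := by
  unfold inX at *
  simp only [Pi.smul_apply, smul_comm _ c, ← Finset.smul_sum, hx, smul_zero]

lemma inX.sub {m : Fin N → ℝ} {x y : Conf d N} (hx : inX m x) (hy : inX m y) : inX m (x - y) := by
  have := hx.add (hy.smul (-1))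
  simpa [sub_eq_add_neg] using this

lemma inX_zero {m : Fin N → ℝ} : inX m (0 : Conf d N) := by simp [inX]

lemma continuousAt_U (m : Fin N → ℝ) {x : Conf d N} (hx : ¬ collision x) :
    ContinuousAt (U m) x := by
  unfold U
  refine tendsto_finsetSum _ fun i _ => tendsto_finsetSum _ fun j _ => ?_
  split_ifs with hij
  · have : ‖x i - x j‖ ≠ 0 := by
      rw [norm_ne_zero_iff, sub_ne_zero]; exact fun h => hx ⟨i, j, hij.ne, h⟩
    have h : ContinuousAt (fun x : Conf d N => m i * m j / ‖x i - x j‖) x :=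
      ContinuousAt.div (by fun_prop) (by fun_prop) this
    exact h
  · exact tendsto_const_nhds

lemma measurable_U (m : Fin N → ℝ) : Measurable (U m : Conf d N → ℝ) := by
  unfold U
  refine Finset.measurable_sum _ fun i _ => Finset.measurable_sum _ fun j _ => ?_
  split_ifs with hij
  · exact measurable_const.div (by fun_prop)
  · exact measurable_const

lemma not_collision_smul {x : Conf d N} (hx : ¬ collision x) {t : ℝ} (ht : t ≠ 0) :
    ¬ collision (t • x) := by
  rintro ⟨i, j, hij, h⟩
  exact hx ⟨i, j, hij, smul_right_injective _ ht h⟩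

lemma integrableOn_U_smul (m : Fin N → ℝ) {a : Conf d N} (ha : ¬ collision a) (T : ℝ) :
    IntegrableOn (fun t : ℝ => U m (t • a)) (Ioc 1 T) := by
  refine IntegrableOn.mono_set (t := Icc 1 T) (ContinuousOn.integrableOn_Icc ?_) Ioc_subset_Icc_self
  intro t ht
  have : t ≠ 0 := by have := ht.1; linarith
  have h := (continuousAt_U m (not_collision_smul ha this))
  exact (ContinuousAt.comp (f := fun t : ℝ => t • a) h (by fun_prop)).continuousWithinAt

/-- `ξ` is a variation with velocity `ξ'`, of finite energy and vanishing after time `T`. -/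
structure Variation (m : Fin N → ℝ) (T : ℝ) (ξ ξ' : ℝ → Conf d N) : Prop where
  inX : ∀ t, 1 ≤ t → inX m (ξ t)
  integrableOn : IntegrableOn ξ' (Ioc 1 T)
  integrableOn_sq : IntegrableOn (fun t => minner m (ξ' t) (ξ' t)) (Ioc 1 T)
  eq_integral : ∀ t, 1 ≤ t → ξ t = ξ 1 + ∫ s in Ioc 1 t, ξ' s
  deriv_eq_zero : ∀ t, T < t → ξ' t = 0
  eq_zero : ∀ t, T ≤ t → ξ t = 0

lemma integrable_minner {m : Fin N → ℝ} (hm : ∀ i, 0 < m i) {α : Type*} [MeasurableSpace α]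
    {μ : Measure α} {f g : α → Conf d N} (hf : AEStronglyMeasurable f μ)
    (hg : AEStronglyMeasurable g μ) (hff : Integrable (fun t => minner m (f t) (f t)) μ)
    (hgg : Integrable (fun t => minner m (g t) (g t)) μ) :
    Integrable (fun t => minner m (f t) (g t)) μ := by
  refine Integrable.mono' ((hff.add hgg).div_const 2)
    ((continuous_minner m).comp_aestronglyMeasurable₂ hf hg) ?_
  filter_upwards with t
  simpa using abs_minner_le hm (f t) (g t)

section Minimizer

variable {m : Fin N → ℝ} {a x : Conf d N} {φ φ' : ℝ → Conf d N} {V : ℝ}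

lemma InD.integrableOn (h : InD m 1 ⊤ φ φ') (T : ℝ) : IntegrableOn φ' (Ioc 1 T) := by
  rcases le_total 1 T with hT | hT
  · exact h.2.2.2.1 T hT (EReal.coe_lt_top _)
  · simp [Ioc_eq_empty_of_le hT]

lemma InD.eq_integral (h : InD m 1 ⊤ φ φ') {t : ℝ} (ht : 1 ≤ t) :
    φ t = ∫ s in Ioc 1 t, φ' s := h.2.2.1 t ht (EReal.coe_lt_top _)

lemma InD.inX (h : InD m 1 ⊤ φ φ') {t : ℝ} (ht : 1 ≤ t) : inX m (φ t) :=
  h.2.1 t ht (EReal.coe_lt_top _)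

lemma InD.integrableOn_sq (hm : ∀ i, 0 < m i) (h : InD m 1 ⊤ φ φ') :
    IntegrableOn (fun t => minner m (φ' t) (φ' t)) (Ioi 1) := by
  have := h.2.2.2.2
  rw [timeSet_top] at this
  simpa only [mnorm_sq hm] using this

lemma integrable_of_hypAction (hV : hypAction m a x ⊤ φ φ' = (V : EReal)) :
    IntegrableOn (hypIntegrand m a x φ φ') (Ioi 1) ∧
      (∀ᵐ t ∂volume.restrict (Ioi 1), ¬ collision (hypCurve a x φ t)) ∧
      ∫ t in Ioi 1, hypIntegrand m a x φ φ' t = V := by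
  unfold hypAction at hV
  split_ifs at hV with h
  · rw [timeSet_top] at h hV
    exact ⟨h.1, h.2, by exact_mod_cast hV⟩
  · exact absurd hV (EReal.top_ne_coe _)

lemma integrableOn_U_hypCurve (hm : ∀ i, 0 < m i) (ha : ¬ collision a) (h : InD m 1 ⊤ φ φ')
    (hV : hypAction m a x ⊤ φ φ' = (V : EReal)) (T : ℝ) :
    IntegrableOn (fun t => U m (hypCurve a x φ t)) (Ioc 1 T) := by
  have h1 := (integrable_of_hypAction hV).1.mono_set (t := Ioi 1) (s := Ioc 1 T) Ioc_subset_Ioi_self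
  have h2 := (h.integrableOn_sq hm).mono_set (t := Ioi 1) (s := Ioc 1 T) Ioc_subset_Ioi_self
  have h3 := (h1.add (integrableOn_U_smul m ha T)).sub (h2.div_const 2)
  refine h3.congr ?_
  filter_upwards with t
  simp [hypIntegrand, mnorm_sq hm]

lemma setIntegral_Ioc_eq_of_zero {E : Type*} [NormedAddCommGroup E] [NormedSpace ℝ E]
    {f : ℝ → E} {T : ℝ} (hf : ∀ t, T < t → f t = 0) (t : ℝ) (ht : T ≤ t) :
    ∫ s in Ioc 1 t, f s = ∫ s in Ioc 1 T, f s := by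
  refine setIntegral_eq_of_subset_of_forall_sdiff_eq_zero measurableSet_Ioc
    (Ioc_subset_Ioc_right ht) fun s hs => hf s ?_
  by_contra hc
  exact hs.2 ⟨hs.1.1, not_lt.1 hc⟩

lemma Variation.integrableOn_Ioc {T : ℝ} {ξ ξ' : ℝ → Conf d N} (hξ : Variation m T ξ ξ') (t : ℝ) :
    IntegrableOn ξ' (Ioc 1 t) := by
  have : IntegrableOn ξ' (Ioc 1 T ∪ Ioi T) :=
    hξ.integrableOn.union (integrableOn_zero.congr_fun (fun t ht => (hξ.deriv_eq_zero t ht).symm)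
      measurableSet_Ioi)
  refine this.mono_set fun s hs => ?_
  rcases le_or_gt s T with h | h
  · exact Or.inl ⟨hs.1, h⟩
  · exact Or.inr h

lemma hypInf_add_le (hm : ∀ i, 0 < m i) (ha : ¬ collision a) (h : InD m 1 ⊤ φ φ')
    (hV : hypAction m a x ⊤ φ φ' = (V : EReal)) {T : ℝ} {ξ ξ' : ℝ → Conf d N}
    (hξ : Variation m T ξ ξ')
    (hU : IntegrableOn (fun t => U m (hypCurve a x φ t + ξ t)) (Ioc 1 T))
    (hc : ∀ᵐ t ∂volume.restrict (Ioc 1 T), ¬ collision (hypCurve a x φ t + ξ t)) :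
    hypInf m a (x + ξ 1) ⊤ ≤ ((V + ∫ t in Ioc 1 T, (minner m (φ' t) (ξ' t)
      + minner m (ξ' t) (ξ' t) / 2 + U m (hypCurve a x φ t + ξ t) - U m (hypCurve a x φ t)) : ℝ) :
      EReal) := by
  obtain ⟨hI, hnc, hint⟩ := integrable_of_hypAction hV
  set D : ℝ → ℝ := fun t => minner m (φ' t) (ξ' t)
      + minner m (ξ' t) (ξ' t) / 2 + U m (hypCurve a x φ t + ξ t) - U m (hypCurve a x φ t) with hD
  have hcross : IntegrableOn (fun t => minner m (φ' t) (ξ' t)) (Ioc 1 T) :=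
    integrable_minner hm (h.integrableOn T).aestronglyMeasurable
      hξ.integrableOn.aestronglyMeasurable
      ((h.integrableOn_sq hm).mono_set Ioc_subset_Ioi_self) hξ.integrableOn_sq
  have hDi : IntegrableOn D (Ioc 1 T) :=
    ((hcross.add (hξ.integrableOn_sq.div_const 2)).add hU).sub
      (integrableOn_U_hypCurve hm ha h hV T)
  have hD0 : ∀ t, T < t → D t = 0 := fun t ht => by
    simp [hD, hξ.deriv_eq_zero t ht, hξ.eq_zero t ht.le]
  have hDi' : IntegrableOn D (Ioi 1) := by
    have : IntegrableOn D (Ioc 1 T ∪ Ioi T) :=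
      hDi.union (integrableOn_zero.congr_fun (fun t ht => (hD0 t ht).symm) measurableSet_Ioi)
    refine this.mono_set fun s hs => ?_
    rcases le_or_gt s T with h | h
    · exact Or.inl ⟨hs, h⟩
    · exact Or.inr h
  have hDint : ∫ t in Ioi 1, D t = ∫ t in Ioc 1 T, D t := by
    refine setIntegral_eq_of_subset_of_forall_sdiff_eq_zero measurableSet_Ioi
      Ioc_subset_Ioi_self fun s hs => hD0 s ?_
    by_contra hc
    exact hs.2 ⟨hs.1, not_lt.1 hc⟩
  set ψ : ℝ → Conf d N := fun t => φ t + ξ t - ξ 1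
  set ψ' : ℝ → Conf d N := fun t => φ' t + ξ' t
  have hcurve : ∀ t, hypCurve a (x + ξ 1) ψ t = hypCurve a x φ t + ξ t := fun t => by
    simp only [hypCurve, ψ]; abel
  have hintg : hypIntegrand m a (x + ξ 1) ψ ψ' = fun t => hypIntegrand m a x φ φ' t + D t := by
    funext t
    simp only [hypIntegrand, hcurve, mnorm_sq hm, ψ', hD, minner_add_left, minner_add_right,
      minner_comm m (ξ' t) (φ' t)]
    ring
  have hψ : InD m 1 ⊤ ψ ψ' := by
    refine ⟨by simp [ψ, h.1], fun t ht _ => ((h.inX ht).add (hξ.inX t ht)).sub (hξ.inX 1 le_rfl),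
      fun t ht _ => ?_, fun t ht _ => (h.integrableOn t).add (hξ.integrableOn_Ioc t), ?_⟩
    · simp only [ψ, ψ']
      rw [integral_add (h.integrableOn t) (hξ.integrableOn_Ioc t), h.eq_integral ht,
        hξ.eq_integral t ht]
      abel
    · rw [timeSet_top]
      simp only [mnorm_sq hm, ψ']
      have : IntegrableOn (fun t => minner m (φ' t + ξ' t) (φ' t + ξ' t)
          - minner m (φ' t) (φ' t)) (Ioc 1 T ∪ Ioi T) := by
        refine IntegrableOn.union ?_ (integrableOn_zero.congr_fun
          (fun t ht => by simp [hξ.deriv_eq_zero t ht]) measurableSet_Ioi)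
        refine ((hcross.const_mul 2).add hξ.integrableOn_sq).congr ?_
        filter_upwards with t
        simp only [Pi.add_apply, minner_add_left, minner_add_right, minner_comm m (ξ' t) (φ' t)]
        ring
      have h2 := (this.mono_set (s := Ioi 1) fun s hs => by
        rcases le_or_gt s T with h | h
        · exact Or.inl ⟨hs, h⟩
        · exact Or.inr h).add (h.integrableOn_sq hm)
      exact h2.congr (by filter_upwards with t; simp)
  refine iInf_le_of_le ψ (iInf_le_of_le ψ' (iInf_le_of_le hψ ?_))
  have hcond : IntegrableOn (hypIntegrand m a (x + ξ 1) ψ ψ') (timeSet 1 ⊤) ∧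
      ∀ᵐ t ∂volume.restrict (timeSet 1 ⊤), ¬ collision (hypCurve a (x + ξ 1) ψ t) := by
    rw [timeSet_top, hintg]
    refine ⟨hI.add hDi', ?_⟩
    rw [ae_restrict_iff' measurableSet_Ioi] at hnc ⊢
    rw [ae_restrict_iff' measurableSet_Ioc] at hc
    filter_upwards [hnc, hc] with t h1 h2 ht
    rw [hcurve]
    rcases le_or_gt t T with h | h
    · exact h2 ⟨ht, h⟩
    · simpa [hξ.eq_zero t h.le] using h1 ht
  rw [hypAction, if_pos hcond, timeSet_top, hintg, integral_add hI hDi', hint, hDint]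

end Minimizer

/-- The Newtonian potential with value `⊤` at collisions. -/
def extendedU (m : Fin N → ℝ) (x : Conf d N) : ℝ≥0∞ :=
  ∑ i : Fin N, ∑ j : Fin N,
    if i < j then ENNReal.ofReal (m i * m j) * (ENNReal.ofReal ‖x i - x j‖)⁻¹ else 0

lemma measurable_extendedU (m : Fin N → ℝ) : Measurable (extendedU m : Conf d N → ℝ≥0∞) := by
  unfold extendedU
  refine Finset.measurable_sum _ fun i _ => Finset.measurable_sum _ fun j _ => ?_
  split_ifs with hij
  · fun_prop
  · exact measurable_const

lemma U_nonneg {m : Fin N → ℝ} (hm : ∀ i, 0 < m i) (x : Conf d N) : 0 ≤ U m x := by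
  unfold U
  refine Finset.sum_nonneg fun i _ => Finset.sum_nonneg fun j _ => ?_
  have := (hm i).le
  have := (hm j).le
  split_ifs <;> positivity

lemma extendedU_eq_ofReal {m : Fin N → ℝ} (hm : ∀ i, 0 < m i) {x : Conf d N}
    (hx : ¬ collision x) : extendedU m x = ENNReal.ofReal (U m x) := by
  have h0 : ∀ i j : Fin N, 0 ≤ if i < j then m i * m j / ‖x i - x j‖ else 0 := fun i j => by
    have := (hm i).le
    have := (hm j).le
    split_ifs <;> positivity
  unfold extendedU U
  rw [ENNReal.ofReal_sum_of_nonneg fun i _ => Finset.sum_nonneg fun j _ => h0 i j]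
  refine Finset.sum_congr rfl fun i _ => ?_
  rw [ENNReal.ofReal_sum_of_nonneg fun j _ => h0 i j]
  refine Finset.sum_congr rfl fun j _ => ?_
  split_ifs with hij
  · have : 0 < ‖x i - x j‖ := by
      rw [norm_pos_iff, sub_ne_zero]; exact fun h => hx ⟨i, j, hij.ne, h⟩
    rw [ENNReal.ofReal_div_of_pos this, div_eq_mul_inv]
  · simp

lemma collision.exists_lt {x : Conf d N} (hx : collision x) : ∃ i j, i < j ∧ x i = x j := by
  obtain ⟨i, j, hij, h⟩ := hx
  rcases lt_or_gt_of_ne hij with h' | h'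
  · exact ⟨i, j, h', h⟩
  · exact ⟨j, i, h', h.symm⟩

lemma extendedU_eq_top {m : Fin N → ℝ} (hm : ∀ i, 0 < m i) {x : Conf d N}
    (hx : collision x) : extendedU m x = ⊤ := by
  obtain ⟨i, j, hij, h⟩ := hx.exists_lt
  unfold extendedU
  rw [ENNReal.sum_eq_top]
  refine ⟨i, Finset.mem_univ _, ?_⟩
  rw [ENNReal.sum_eq_top]
  refine ⟨j, Finset.mem_univ _, ?_⟩
  have := mul_pos (hm i) (hm j)
  simp [hij, h, this]

section Minimizer

variable {m : Fin N → ℝ} {a x : Conf d N} {φ φ' : ℝ → Conf d N} {V : ℝ}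

lemma continuousOn_primitive_Icc {E : Type*} [NormedAddCommGroup E] [NormedSpace ℝ E]
    {f : ℝ → E} {T : ℝ} (hf : IntegrableOn f (Ioc 1 T)) :
    ContinuousOn (fun t => ∫ s in Ioc 1 t, f s) (Icc 1 T) := by
  refine intervalIntegral.continuousOn_primitive ?_
  rwa [integrableOn_Icc_iff_integrableOn_Ioc]

lemma InD.continuousOn (h : InD m 1 ⊤ φ φ') (T : ℝ) : ContinuousOn φ (Icc 1 T) :=
  (continuousOn_primitive_Icc (h.integrableOn T)).congr fun _ ht => h.eq_integral ht.1

lemma InD.continuousOn_hypCurve (h : InD m 1 ⊤ φ φ') (a x : Conf d N) (T : ℝ) :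
    ContinuousOn (hypCurve a x φ) (Icc 1 T) := by
  unfold hypCurve
  have := h.continuousOn T
  fun_prop

lemma Variation.continuousOn {T : ℝ} {ξ ξ' : ℝ → Conf d N} (hξ : Variation m T ξ ξ') (S : ℝ) :
    ContinuousOn ξ (Icc 1 S) :=
  (continuousOn_const.add (continuousOn_primitive_Icc (hξ.integrableOn_Ioc S))).congr
    fun _ ht => hξ.eq_integral _ ht.1

lemma aemeasurable_Ioc {E : Type*} [TopologicalSpace E] [TopologicalSpace.PseudoMetrizableSpace E]
    [MeasurableSpace E] [BorelSpace E] [SecondCountableTopology E]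
    {f : ℝ → E} {T : ℝ} (hf : ContinuousOn f (Icc 1 T)) :
    AEMeasurable f (volume.restrict (Ioc 1 T)) :=
  (hf.mono Ioc_subset_Icc_self).aemeasurable measurableSet_Ioc

lemma lintegral_lagrangian_eq (hm : ∀ i, 0 < m i) {α : Type*} [MeasurableSpace α] {μ : Measure α}
    {v c : α → Conf d N}
    (hvv : Integrable (fun t => minner m (v t) (v t)) μ) (hU : Integrable (fun t => U m (c t)) μ)
    (hc : ∀ᵐ t ∂μ, ¬ collision (c t)) :
    ∫⁻ t, (ENNReal.ofReal (minner m (v t) (v t) / 2) + extendedU m (c t)) ∂μ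
      = ENNReal.ofReal (∫ t, (minner m (v t) (v t) / 2 + U m (c t)) ∂μ) := by
  have h0 := fun x : Conf d N => minner_self_nonneg hm x
  rw [ofReal_integral_eq_lintegral_ofReal
    (f := fun t => minner m (v t) (v t) / 2 + U m (c t)) ((hvv.div_const 2).add hU)
    (ae_of_all _ fun t => add_nonneg (by have := h0 (v t); positivity) (U_nonneg hm _))]
  refine lintegral_congr_ae ?_
  filter_upwards [hc] with t ht
  rw [ENNReal.ofReal_add (by have := h0 (v t); positivity) (U_nonneg hm _),
    extendedU_eq_ofReal hm ht]

lemma lintegral_lagrangian_lt_top (hm : ∀ i, 0 < m i) (ha : ¬ collision a) (h : InD m 1 ⊤ φ φ')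
    (hV : hypAction m a x ⊤ φ φ' = (V : EReal)) (T : ℝ) :
    ∫⁻ t in Ioc 1 T, (ENNReal.ofReal (minner m (φ' t) (φ' t) / 2)
      + extendedU m (hypCurve a x φ t)) < ⊤ := by
  rw [lintegral_lagrangian_eq hm ((h.integrableOn_sq hm).mono_set Ioc_subset_Ioi_self)
    (integrableOn_U_hypCurve hm ha h hV T)
    (ae_restrict_of_ae_restrict_of_subset Ioc_subset_Ioi_self (integrable_of_hypAction hV).2.1)]
  exact ENNReal.ofReal_lt_top

lemma lintegral_lagrangian_le (hm : ∀ i, 0 < m i) (ha : ¬ collision a) (h : InD m 1 ⊤ φ φ')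
    (hV : hypAction m a x ⊤ φ φ' = (V : EReal)) (hmin : hypInf m a x ⊤ = (V : EReal))
    {T : ℝ} {ξ ξ' : ℝ → Conf d N} (hξ : Variation m T ξ ξ') (hξ1 : ξ 1 = 0) :
    ∫⁻ t in Ioc 1 T, (ENNReal.ofReal (minner m (φ' t) (φ' t) / 2)
      + extendedU m (hypCurve a x φ t)) ≤
    ∫⁻ t in Ioc 1 T, (ENNReal.ofReal (minner m (φ' t + ξ' t) (φ' t + ξ' t) / 2)
      + extendedU m (hypCurve a x φ t + ξ t)) := by
  by_cases htop : ∫⁻ t in Ioc 1 T, (ENNReal.ofReal (minner m (φ' t + ξ' t) (φ' t + ξ' t) / 2)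
      + extendedU m (hypCurve a x φ t + ξ t)) = ⊤
  · rw [htop]; exact le_top
  have hmeas : AEMeasurable (fun t => hypCurve a x φ t + ξ t) (volume.restrict (Ioc 1 T)) :=
    aemeasurable_Ioc ((h.continuousOn_hypCurve a x T).add (hξ.continuousOn T))
  have hUtop : ∫⁻ t in Ioc 1 T, extendedU m (hypCurve a x φ t + ξ t) ≠ ⊤ :=
    ne_top_of_le_ne_top htop (lintegral_mono fun t => le_add_self)
  have hc : ∀ᵐ t ∂volume.restrict (Ioc 1 T), ¬ collision (hypCurve a x φ t + ξ t) := by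
    filter_upwards [ae_lt_top' ((measurable_extendedU m).comp_aemeasurable hmeas) hUtop]
      with t ht hcol
    exact ht.ne (extendedU_eq_top hm hcol)
  have hU : IntegrableOn (fun t => U m (hypCurve a x φ t + ξ t)) (Ioc 1 T) := by
    refine ⟨((measurable_U m).comp_aemeasurable hmeas).aestronglyMeasurable, ?_⟩
    rw [hasFiniteIntegral_iff_ofReal (ae_of_all _ fun t => U_nonneg hm _)]
    refine lt_of_le_of_lt (le_of_eq (lintegral_congr_ae ?_)) (lt_top_iff_ne_top.2 hUtop)
    filter_upwards [hc] with t ht using (extendedU_eq_ofReal hm ht).symm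
  have hle := hypInf_add_le hm ha h hV hξ hU hc
  rw [hξ1, add_zero, hmin, EReal.coe_le_coe_iff] at hle
  have hφφ := (h.integrableOn_sq hm).mono_set (s := Ioc 1 T) Ioc_subset_Ioi_self
  have hcross : IntegrableOn (fun t => minner m (φ' t) (ξ' t)) (Ioc 1 T) :=
    integrable_minner hm (h.integrableOn T).aestronglyMeasurable
      hξ.integrableOn.aestronglyMeasurable hφφ hξ.integrableOn_sq
  have hsum : IntegrableOn (fun t => minner m (φ' t + ξ' t) (φ' t + ξ' t)) (Ioc 1 T) := by
    refine ((hφφ.add (hcross.const_mul 2)).add hξ.integrableOn_sq).congr ?_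
    filter_upwards with t
    simp only [Pi.add_apply, minner_add_left, minner_add_right, minner_comm m (ξ' t) (φ' t)]
    ring
  have hUφ := integrableOn_U_hypCurve hm ha h hV T
  rw [lintegral_lagrangian_eq hm hφφ hUφ
    (ae_restrict_of_ae_restrict_of_subset Ioc_subset_Ioi_self (integrable_of_hypAction hV).2.1),
    lintegral_lagrangian_eq hm hsum hU hc]
  refine ENNReal.ofReal_le_ofReal ?_
  rw [← sub_nonneg]
  refine (nonneg_of_le_add_right hle).trans (le_of_eq (Eq.trans (integral_congr_ae ?_)
    (integral_sub ((hsum.div_const 2).add hU) ((hφφ.div_const 2).add hUφ))))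
  filter_upwards with t
  simp only [minner_add_left, minner_add_right, minner_comm m (ξ' t) (φ' t)]
  ring

end Minimizer

/-- The displacement of the `i`-th body by `s`, corrected to keep the barycenter at the origin. -/
def shift (m : Fin N → ℝ) (i : Fin N) (s : EuclideanSpace ℝ (Fin d)) : Conf d N :=
  fun k => (if k = i then s else 0) - (m i / ∑ l, m l) • s

section Shift

variable {m : Fin N → ℝ}

lemma continuous_shift (i : Fin N) : Continuous (shift m i : EuclideanSpace ℝ (Fin d) → Conf d N) := by
  refine continuous_pi fun k => ?_
  simp only [shift]
  split_ifs <;> fun_prop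

lemma shift_neg (i : Fin N) (s : EuclideanSpace ℝ (Fin d)) : shift m i (-s) = -shift m i s := by
  ext k : 1
  simp only [shift, Pi.neg_apply]
  split_ifs
  · simp; abel
  · simp

lemma shift_sub (i p q : Fin N) (s : EuclideanSpace ℝ (Fin d)) :
    shift m i s p - shift m i s q = (if p = i then s else 0) - (if q = i then s else 0) := by
  simp [shift]

lemma sum_mass_pos (hm : ∀ i, 0 < m i) (i : Fin N) : 0 < ∑ l, m l :=
  (hm i).trans_le (Finset.single_le_sum (f := m) (fun i _ => (hm i).le) (Finset.mem_univ i))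

lemma inX_shift (hm : ∀ i, 0 < m i)
    (i : Fin N) (s : EuclideanSpace ℝ (Fin d)) : inX m (shift m i s) := by
  have := (sum_mass_pos hm i).ne'
  simp only [inX, shift, smul_sub, Finset.sum_sub_distrib, smul_ite, smul_zero,
    Finset.sum_ite_eq', Finset.mem_univ, if_true, ← Finset.sum_smul, smul_smul, ← Finset.sum_mul]
  rw [mul_div_cancel₀ _ this, sub_self]

lemma norm_shift_le (hm : ∀ i, 0 < m i)
    (i : Fin N) (s : EuclideanSpace ℝ (Fin d)) : ‖shift m i s‖ ≤ 2 * ‖s‖ := by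
  rw [pi_norm_le_iff_of_nonneg (by positivity)]
  intro k
  have h1 : ‖(if k = i then s else 0 : EuclideanSpace ℝ (Fin d))‖ ≤ ‖s‖ := by
    split_ifs <;> simp
  have h2 : ‖(m i / ∑ l, m l) • s‖ ≤ ‖s‖ := by
    have hp := sum_mass_pos hm i
    have h0 := hm i
    rw [norm_smul, Real.norm_of_nonneg (by positivity)]
    have : m i / ∑ l, m l ≤ 1 := (div_le_one hp).2
      (Finset.single_le_sum (f := m) (fun i _ => (hm i).le) (Finset.mem_univ i))
    nlinarith [norm_nonneg s]
  refine (norm_sub_le _ _).trans ?_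
  linarith

lemma minner_shift_le (hm : ∀ i, 0 < m i) (i : Fin N) (s : EuclideanSpace ℝ (Fin d)) :
    minner m (shift m i s) (shift m i s) ≤ 4 * (∑ l, m l) * ‖s‖ ^ 2 := by
  refine (minner_self_le hm _).trans ?_
  have h0 := sum_mass_pos hm i
  have := pow_le_pow_left₀ (norm_nonneg _) (norm_shift_le hm i s) 2
  nlinarith

lemma lintegral_kinetic_shift_le (hm : ∀ i, 0 < m i)
    {ν : Measure (EuclideanSpace ℝ (Fin d))} (hν1 : ν univ ≤ 1)
    (hsymm : ∀ f : EuclideanSpace ℝ (Fin d) → ℝ≥0∞, Measurable f →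
      ∫⁻ s, f (-s) ∂ν = ∫⁻ s, f s ∂ν) (i : Fin N) (v : Conf d N) (c : ℝ) :
    ∫⁻ s, ENNReal.ofReal (minner m (v + c • shift m i s) (v + c • shift m i s) / 2) ∂ν
      ≤ ENNReal.ofReal (minner m v v / 2)
        + ENNReal.ofReal (c ^ 2 * (2 * ∑ l, m l)) * ∫⁻ s, ENNReal.ofReal (‖s‖ ^ 2) ∂ν := by
  set f : EuclideanSpace ℝ (Fin d) → ℝ≥0∞ := fun s =>
    ENNReal.ofReal (minner m (v + c • shift m i s) (v + c • shift m i s) / 2) with hf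
  have hfm : Measurable f := by
    have h1 := continuous_shift (d := d) (m := m) i
    have h2 : Continuous fun s => v + c • shift m i s := by fun_prop
    have h3 := (continuous_minner m).comp (h2.prodMk h2)
    exact (ENNReal.continuous_ofReal.comp (h3.div_const 2)).measurable
  have h0 := fun x : Conf d N => minner_self_nonneg hm x
  have hS := (sum_mass_pos hm i).le
  have hpt : ∀ s, f s + f (-s) ≤ 2 * (ENNReal.ofReal (minner m v v / 2)
        + ENNReal.ofReal (c ^ 2 * (2 * ∑ l, m l)) * ENNReal.ofReal (‖s‖ ^ 2)) := fun s => by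
    simp only [hf]
    rw [← ENNReal.ofReal_add (by have := h0 (v + c • shift m i s); positivity)
      (by have := h0 (v + c • shift m i (-s)); positivity), ← ENNReal.ofReal_mul (by positivity),
      ← ENNReal.ofReal_add (by have := h0 v; positivity) (by positivity), two_mul,
      ← ENNReal.ofReal_add (by have := h0 v; positivity) (by have := h0 v; positivity)]
    refine ENNReal.ofReal_le_ofReal ?_
    have := minner_shift_le hm i s
    rw [shift_neg]
    simp only [smul_neg, ← sub_eq_add_neg, minner_add_left, minner_add_right, minner_sub_left,
      minner_sub_right, minner_smul_left, minner_smul_right]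
    nlinarith [mul_le_mul_of_nonneg_left this (sq_nonneg c)]
  have h2 : 2 * ∫⁻ s, f s ∂ν ≤ 2 * (ENNReal.ofReal (minner m v v / 2)
        + ENNReal.ofReal (c ^ 2 * (2 * ∑ l, m l)) * ∫⁻ s, ENNReal.ofReal (‖s‖ ^ 2) ∂ν) := by
    calc 2 * ∫⁻ s, f s ∂ν = ∫⁻ s, (f s + f (-s)) ∂ν := by
          rw [lintegral_add_left hfm, hsymm f hfm, two_mul]
      _ ≤ ∫⁻ s, 2 * (ENNReal.ofReal (minner m v v / 2)
        + ENNReal.ofReal (c ^ 2 * (2 * ∑ l, m l)) * ENNReal.ofReal (‖s‖ ^ 2)) ∂ν :=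
          lintegral_mono hpt
      _ = 2 * (ENNReal.ofReal (minner m v v / 2) * ν univ
        + ENNReal.ofReal (c ^ 2 * (2 * ∑ l, m l)) * ∫⁻ s, ENNReal.ofReal (‖s‖ ^ 2) ∂ν) := by
          rw [lintegral_const_mul' _ _ (by simp), lintegral_add_left measurable_const,
            lintegral_const, lintegral_const_mul' _ _ ENNReal.ofReal_ne_top]
      _ ≤ _ := by
          gcongr
          exact mul_le_of_le_one_right' hν1
  exact (ENNReal.mul_le_mul_iff_right (by simp) (by simp)).1 h2

lemma lintegral_extendedU_shift_le {ν : Measure (EuclideanSpace ℝ (Fin d))} (hν1 : ν univ ≤ 1)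
    {z : ℝ} (hν : ∀ (x : EuclideanSpace ℝ (Fin d)) (h : ℝ), 0 ≤ h →
      ∫⁻ s, (ENNReal.ofReal ‖x + h • s‖)⁻¹ ∂ν ≤ (ENNReal.ofReal √(‖x‖ ^ 2 + (h * z) ^ 2))⁻¹)
    {i j : Fin N} (hij : i < j) (x : Conf d N) {h : ℝ} (hh : 0 ≤ h) {D : ℝ≥0∞}
    (hD : (ENNReal.ofReal √(‖x i - x j‖ ^ 2 + (h * z) ^ 2))⁻¹ + D
      ≤ (ENNReal.ofReal ‖x i - x j‖)⁻¹) :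
    ∫⁻ s, extendedU m (x + h • shift m i s) ∂ν + ENNReal.ofReal (m i * m j) * D
      ≤ extendedU m x := by
  have hν' : ∀ y : EuclideanSpace ℝ (Fin d),
      ∫⁻ s, (ENNReal.ofReal ‖y + h • s‖)⁻¹ ∂ν ≤ (ENNReal.ofReal ‖y‖)⁻¹ := fun y => by
    refine (hν y h hh).trans (ENNReal.inv_le_inv.2 (ENNReal.ofReal_le_ofReal ?_))
    exact Real.le_sqrt_of_sq_le (by nlinarith [sq_nonneg (h * z)])
  have hsum : ENNReal.ofReal (m i * m j) * D = ∑ p : Fin N, ∑ q : Fin N,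
      if p = i ∧ q = j then ENNReal.ofReal (m i * m j) * D else 0 := by
    simp [ite_and]
  have hcont := continuous_shift (d := d) (m := m) i
  have hm1 : ∀ p q : Fin N, Measurable fun s : EuclideanSpace ℝ (Fin d) =>
      if p < q then ENNReal.ofReal (m p * m q)
        * (ENNReal.ofReal ‖(x + h • shift m i s) p - (x + h • shift m i s) q‖)⁻¹ else 0 :=
    fun p q => by
    split_ifs
    · have : Continuous fun s : EuclideanSpace ℝ (Fin d) =>
        ‖(x + h • shift m i s) p - (x + h • shift m i s) q‖ := by fun_prop
      have := this.measurable
      fun_prop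
    · exact measurable_const
  rw [hsum]
  unfold extendedU
  rw [lintegral_finsetSum _ fun p _ => Finset.measurable_sum _ fun q _ => hm1 p q,
    ← Finset.sum_add_distrib]
  refine Finset.sum_le_sum fun p _ => ?_
  rw [lintegral_finsetSum _ fun q _ => hm1 p q, ← Finset.sum_add_distrib]
  refine Finset.sum_le_sum fun q _ => ?_
  have hdiff : ∀ s, (x + h • shift m i s) p - (x + h • shift m i s) q
      = (x p - x q) + h • ((if p = i then s else 0) - (if q = i then s else 0)) := fun s => by
    rw [← shift_sub (m := m), smul_sub]
    simp only [Pi.add_apply, Pi.smul_apply]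
    abel
  simp only [hdiff]
  by_cases hpq : p < q
  swap
  · have : ¬ (p = i ∧ q = j) := fun h => hpq (h.1 ▸ h.2 ▸ hij)
    simp [hpq, this]
  simp only [hpq, if_true]
  rw [lintegral_const_mul' _ _ ENNReal.ofReal_ne_top]
  by_cases hp : p = i
  · have hq : q ≠ i := fun h => (hp ▸ h ▸ hpq).ne rfl
    simp only [hp, hq, if_true, if_false, sub_zero, true_and]
    by_cases hqj : q = j
    · subst hqj
      simp only [if_true, ← mul_add]
      gcongr
      exact (add_le_add_left (hν _ h hh) D).trans hD
    · simp only [hqj, if_false, add_zero]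
      gcongr
      exact hν' _
  · simp only [hp, false_and, if_false, add_zero, zero_sub]
    gcongr
    by_cases hq : q = i
    · simp only [hq, if_true]
      refine le_trans (le_of_eq ?_) ((hν' (-(x p - x i))).trans (by rw [norm_neg]))
      refine lintegral_congr fun s => ?_
      rw [← norm_neg]
      congr 3
      rw [smul_neg]; abel
    · simp only [hq, if_false, neg_zero, smul_zero, add_zero, lintegral_const]
      exact mul_le_of_le_one_right' hν1

end Shift

lemma inv_sqrt_add_le {r y y' : ℝ} (hr : 0 ≤ r) (hry : r ≤ y) (hy : 0 < y) (hy' : y ≤ y') :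
    (ENNReal.ofReal √(r ^ 2 + y' ^ 2))⁻¹ + ENNReal.ofReal (1 / (5 * y))
      ≤ (ENNReal.ofReal r)⁻¹ := by
  rcases hr.eq_or_lt with rfl | hr
  · simp
  have h1 : 5 / 4 * r ≤ √(r ^ 2 + y' ^ 2) := by
    refine Real.le_sqrt_of_sq_le ?_
    nlinarith
  have h2 : 0 < √(r ^ 2 + y' ^ 2) := lt_of_lt_of_le (by positivity) h1
  rw [← ENNReal.ofReal_inv_of_pos h2, ← ENNReal.ofReal_inv_of_pos hr,
    ← ENNReal.ofReal_add (by positivity) (by positivity)]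
  refine ENNReal.ofReal_le_ofReal ?_
  have h3 : (√(r ^ 2 + y' ^ 2))⁻¹ ≤ (5 / 4 * r)⁻¹ := inv_anti₀ (by positivity) h1
  have h4 : 1 / (5 * y) ≤ 1 / (5 * r) := one_div_le_one_div_of_le (by positivity) (by linarith)
  calc _ ≤ (5 / 4 * r)⁻¹ + 1 / (5 * r) := add_le_add h3 h4
    _ = r⁻¹ := by field_simp; norm_num

lemma exists_norm_integral_le {E : Type*} [NormedAddCommGroup E] [NormedSpace ℝ E]
    {v : ℝ → E} {T₀ : ℝ} (hT : 1 < T₀) (hv : IntegrableOn v (Ioc 1 T₀))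
    (hv2 : IntegrableOn (fun t => ‖v t‖ ^ 2) (Ioc 1 T₀)) {K κ η : ℝ} (hK : 0 < K) (hκ : 0 < κ)
    (hη : 0 < η) :
    ∃ z : ℝ, 0 < z ∧ K * z ^ 2 ≤ η ∧ ∀ t ∈ Ioc (T₀ - K * z ^ 2) T₀, 1 ≤ t →
      ‖∫ s in Ioc t T₀, v s‖ ≤ κ * z := by
  set g : ℝ → ℝ := fun t => ∫ s in Ioc 1 t, ‖v s‖ ^ 2 with hg
  have hgc : ContinuousWithinAt g (Icc 1 T₀) T₀ :=
    continuousOn_primitive_Icc hv2 T₀ ⟨hT.le, le_rfl⟩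
  obtain ⟨δ, hδ, hgδ⟩ := Metric.continuousWithinAt_iff.1 hgc (κ ^ 2 / K) (by positivity)
  have hlim : Tendsto (fun z : ℝ => K * z ^ 2) (𝓝[>] 0) (𝓝 0) := by
    have : ContinuousAt (fun z : ℝ => K * z ^ 2) 0 := by fun_prop
    simpa using this.tendsto.mono_left nhdsWithin_le_nhds
  obtain ⟨z, ⟨hz1, hz2⟩, hz0⟩ := (((hlim.eventually (gt_mem_nhds hη)).and
    (hlim.eventually (gt_mem_nhds hδ))).and self_mem_nhdsWithin).exists
  have hz0 : 0 < z := hz0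
  refine ⟨z, hz0, hz1.le, fun t ht ht1 => ?_⟩
  have hsub : Ioc t T₀ ⊆ Ioc 1 T₀ := Ioc_subset_Ioc_left ht1
  have hgt : ∫ s in Ioc t T₀, ‖v s‖ ^ 2 ≤ κ ^ 2 / K := by
    have h1 : g T₀ = g t + ∫ s in Ioc t T₀, ‖v s‖ ^ 2 := by
      simp only [hg]
      rw [← setIntegral_union (Ioc_disjoint_Ioc_of_le le_rfl) measurableSet_Ioc
        (hv2.mono_set (Ioc_subset_Ioc_right ht.2)) (hv2.mono_set hsub),
        Ioc_union_Ioc_eq_Ioc ht1 ht.2]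
    have h2 := hgδ (x := t) ⟨ht1, ht.2⟩ (by
      rw [Real.dist_eq, abs_sub_comm, abs_of_nonneg (by linarith [ht.2])]; linarith [ht.1])
    rw [Real.dist_eq, abs_lt] at h2
    linarith [h2.1]
  set lam : ℝ := κ / (K * z) with hlam
  have hlam0 : 0 < lam := by positivity
  calc ‖∫ s in Ioc t T₀, v s‖ ≤ ∫ s in Ioc t T₀, ‖v s‖ := norm_integral_le_integral_norm _
    _ ≤ ∫ s in Ioc t T₀, (lam / 2 + ‖v s‖ ^ 2 / (2 * lam)) := by
        refine integral_mono (hv.mono_set hsub).norm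
          ((integrable_const _).add ((hv2.mono_set hsub).div_const _)) fun s => ?_
        have : lam / 2 + ‖v s‖ ^ 2 / (2 * lam) - ‖v s‖ = (lam - ‖v s‖) ^ 2 / (2 * lam) := by
          field_simp; ring
        have : 0 ≤ (lam - ‖v s‖) ^ 2 / (2 * lam) := by positivity
        simp only
        linarith
    _ = (T₀ - t) * (lam / 2) + (∫ s in Ioc t T₀, ‖v s‖ ^ 2) / (2 * lam) := by
        rw [integral_add (integrable_const _) ((hv2.mono_set hsub).div_const _), integral_const,
          integral_div]
        simp [ht.2]
    _ ≤ (K * z ^ 2) * (lam / 2) + (κ ^ 2 / K) / (2 * lam) := by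
        gcongr
        linarith [ht.1]
    _ = κ * z := by
        rw [hlam]; field_simp; norm_num

lemma variation_smul {m : Fin N → ℝ} {T : ℝ} (hT : 1 ≤ T) {P P' : ℝ → ℝ}
    (hP : ∀ t, HasDerivAt P (P' t) t) (hP' : Continuous P') (hPT : P T = 0)
    {w : Conf d N} (hw : inX m w) :
    Variation m T (fun t => if t ≤ T then P t • w else 0)
      (fun t => if t ≤ T then P' t • w else 0) := by
  have hcongr : ∀ t ≤ T, ∫ s in Ioc 1 t, (if s ≤ T then P' s • w else 0)
      = ∫ s in Ioc 1 t, P' s • w := fun t ht =>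
    setIntegral_congr_fun measurableSet_Ioc fun s hs => by simp [hs.2.trans ht]
  have hftc : ∀ t, 1 ≤ t → ∫ s in Ioc 1 t, P' s • w = P t • w - P 1 • w := fun t ht => by
    rw [← intervalIntegral.integral_of_le ht]
    exact intervalIntegral.integral_eq_sub_of_hasDerivAt (fun s _ => (hP s).smul_const w)
      (by have : Continuous fun s => P' s • w := by fun_prop
          exact this.intervalIntegrable _ _)
  have hcont : Continuous fun s => P' s • w := by fun_prop
  refine ⟨fun t _ => ?_, ?_, ?_, fun t ht => ?_, fun t ht => if_neg (not_le.2 ht), fun t ht => ?_⟩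
  · split_ifs
    · exact hw.smul _
    · exact inX_zero
  · refine (hcont.integrableOn_Ioc (a := 1) (b := T)).congr_fun (fun s hs => ?_) measurableSet_Ioc
    simp [hs.2]
  · have h2 : Continuous fun s => minner m (P' s • w) (P' s • w) := by
      unfold minner; fun_prop
    refine (h2.integrableOn_Ioc (a := 1) (b := T)).congr_fun (fun s hs => ?_) measurableSet_Ioc
    simp [hs.2]
  · simp only [hT, if_true]
    rcases le_or_gt t T with h | h
    · rw [hcongr t h, hftc t ht, if_pos h]; abel
    · rw [setIntegral_Ioc_eq_of_zero (T := T) (fun s hs => if_neg (not_le.2 hs)) t h.le,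
        hcongr T le_rfl, hftc T hT, if_neg (not_le.2 h), hPT]
      simp
  · rcases ht.eq_or_lt with rfl | h
    · simp [hPT]
    · simp [not_le.2 h]

section Minimizer

variable {m : Fin N → ℝ} {a x : Conf d N} {φ φ' : ℝ → Conf d N} {V : ℝ}

lemma InD.integral_Ioc (h : InD m 1 ⊤ φ φ') {s t : ℝ} (hs : 1 ≤ s) (hst : s ≤ t) :
    ∫ r in Ioc s t, φ' r = φ t - φ s := by
  rw [h.eq_integral hs, h.eq_integral (hs.trans hst), ← Ioc_union_Ioc_eq_Ioc hs hst,
    setIntegral_union (Ioc_disjoint_Ioc_of_le le_rfl) measurableSet_Ioc (h.integrableOn s)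
      ((h.integrableOn t).mono_set (Ioc_subset_Ioc_left hs))]
  abel

/-- The relative position of two bodies as a continuous linear map. -/
def relPos (i j : Fin N) : Conf d N →L[ℝ] EuclideanSpace ℝ (Fin d) :=
  ContinuousLinearMap.proj (R := ℝ) (φ := fun _ : Fin N => EuclideanSpace ℝ (Fin d)) i
    - ContinuousLinearMap.proj j

@[simp] lemma relPos_apply (i j : Fin N) (y : Conf d N) : relPos i j y = y i - y j := rfl

lemma exists_relPos_le_of_collision (hm : ∀ i, 0 < m i) (h : InD m 1 ⊤ φ φ') {T₀ : ℝ}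
    (hT₀ : 1 < T₀) {i j : Fin N} (hcol : hypCurve a x φ T₀ i = hypCurve a x φ T₀ j)
    {K κ η : ℝ} (hK : 0 < K) (hκ : 0 < κ) (hη : 0 < η) :
    ∃ z : ℝ, 0 < z ∧ K * z ^ 2 ≤ η ∧ ∀ t ∈ Ioc (T₀ - K * z ^ 2) T₀, 1 ≤ t →
      ‖hypCurve a x φ t i - hypCurve a x φ t j‖ ≤ κ * z := by
  have hint : IntegrableOn (fun s => φ' s + a) (Ioc 1 T₀) :=
    (h.integrableOn T₀).add (integrable_const a)
  have hv : IntegrableOn (fun s => relPos i j (φ' s + a)) (Ioc 1 T₀) :=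
    (relPos i j).integrable_comp hint
  obtain ⟨c, hc0, hc⟩ := exists_norm_sq_le_minner (d := d) hm
  have hv2 : IntegrableOn (fun s => ‖relPos i j (φ' s + a)‖ ^ 2) (Ioc 1 T₀) := by
    have h1 : IntegrableOn (fun s => ‖relPos (d := d) i j‖ ^ 2 * (c * (2 * (minner m (φ' s) (φ' s)
        + minner m a a)))) (Ioc 1 T₀) :=
      (((((h.integrableOn_sq hm).mono_set Ioc_subset_Ioi_self).add
        (integrable_const _)).const_mul 2).const_mul c).const_mul _
    refine h1.mono' (hv.aestronglyMeasurable.norm.pow 2) ?_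
    filter_upwards with s
    rw [Real.norm_of_nonneg (by positivity)]
    have e1 := pow_le_pow_left₀ (norm_nonneg _) ((relPos i j).le_opNorm (φ' s + a)) 2
    rw [mul_pow] at e1
    refine e1.trans (mul_le_mul_of_nonneg_left ((hc _).trans ?_) (by positivity))
    refine mul_le_mul_of_nonneg_left ?_ hc0.le
    have e2 := (abs_le.1 (abs_minner_le hm (φ' s) a)).2
    simp only [minner_add_left, minner_add_right, minner_comm m a (φ' s)]
    linarith
  obtain ⟨z, hz, hz1, hz2⟩ := exists_norm_integral_le hT₀ hv hv2 hK hκ hη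
  refine ⟨z, hz, hz1, fun t ht ht1 => ?_⟩
  have := hz2 t ht ht1
  rw [(relPos i j).integral_comp_comm (hint.mono_set (Ioc_subset_Ioc_left ht1)),
    integral_add ((h.integrableOn T₀).mono_set (Ioc_subset_Ioc_left ht1)) (integrable_const a),
    h.integral_Ioc ht1 ht.2] at this
  refine le_trans (le_of_eq ?_) this
  rw [← norm_neg]
  congr 1
  have e : φ T₀ - φ t + ∫ _ in Ioc t T₀, a = hypCurve a x φ T₀ - hypCurve a x φ t := by
    simp only [hypCurve, integral_const]
    simp [ht.2, sub_smul]
    abel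
  rw [e, relPos_apply]
  simp only [Pi.sub_apply, hcol]
  abel

lemma not_collision_of_isMin (hd : 2 ≤ d) (hm : ∀ i, 0 < m i) (ha : ¬ collision a)
    (hx : ¬ collision x) (h : InD m 1 ⊤ φ φ')
    (hV : hypAction m a x ⊤ φ φ' = (V : EReal)) (hmin : hypInf m a x ⊤ = (V : EReal))
    {T₀ : ℝ} (hT₀ : 1 ≤ T₀) : ¬ collision (hypCurve a x φ T₀) := by
  intro hcol
  obtain ⟨i, j, hij, hcol⟩ := hcol.exists_lt
  rcases hT₀.eq_or_lt with rfl | hT₀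
  · refine hx ⟨i, j, hij.ne, ?_⟩
    simpa [hypCurve, h.1] using hcol
  obtain ⟨C, hC, hlaw⟩ := exists_smoothing_law (F := EuclideanSpace ℝ (Fin d)) (by simpa using hd)
  set T := T₀ + 1 with hT
  set κ := (T₀ - 1) / 2 with hκdef
  have hκ : 0 < κ := by rw [hκdef]; linarith
  set P : ℝ → ℝ := fun t => (t - 1) * (T - t) with hP
  set P' : ℝ → ℝ := fun t => T + 1 - 2 * t with hP'
  set μ : Measure ℝ := volume.restrict (Ioc 1 T) with hμ
  set A : ℝ≥0∞ := ∫⁻ t, (ENNReal.ofReal (minner m (φ' t) (φ' t) / 2)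
      + extendedU m (hypCurve a x φ t)) ∂μ with hAdef
  have hA : A < ⊤ := lintegral_lagrangian_lt_top hm ha h hV T
  set B : ℝ≥0∞ := ENNReal.ofReal (T ^ 2 * (2 * ∑ l, m l)) * C * μ univ with hB
  have hBtop : B + A * C < ⊤ := by
    have h1 : μ univ < ⊤ := by simp [hμ]
    exact ENNReal.add_lt_top.2 ⟨ENNReal.mul_lt_top (ENNReal.mul_lt_top ENNReal.ofReal_lt_top
      hC.lt_top) h1, ENNReal.mul_lt_top hA hC.lt_top⟩
  have hmij := mul_pos (hm i) (hm j)
  set K : ℝ := ((B + A * C).toReal + 1) * (5 * κ) / (m i * m j) with hK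
  have hKpos : 0 < K := by positivity
  obtain ⟨z, hz, hKz, hr⟩ := exists_relPos_le_of_collision hm h hT₀ hcol hKpos hκ hκ
  obtain ⟨ν, hν1, hν2, hsymm, hmom, hpot⟩ := hlaw z hz
  have : IsFiniteMeasure ν := ⟨hν1.trans_lt ENNReal.one_lt_top⟩
  set J : Set ℝ := Ioc (T₀ - K * z ^ 2) T₀ with hJ
  have hJI : J ⊆ Ioc 1 T := fun t ht => ⟨by
    have := ht.1
    rw [hκdef] at hKz
    linarith, by have := ht.2; linarith⟩
  set G : EuclideanSpace ℝ (Fin d) → ℝ → ℝ≥0∞ := fun s t =>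
    ENNReal.ofReal (minner m (φ' t + P' t • shift m i s) (φ' t + P' t • shift m i s) / 2)
      + extendedU m (hypCurve a x φ t + P t • shift m i s) with hG
  have hAG : ∀ s, A ≤ ∫⁻ t, G s t ∂μ := fun s => by
    have hvar : Variation m T (fun t => if t ≤ T then P t • shift m i s else 0)
        (fun t => if t ≤ T then P' t • shift m i s else 0) := by
      refine variation_smul (by linarith) (fun t => ?_) (by fun_prop) (by simp [hP])
        (inX_shift hm i s)
      have := ((hasDerivAt_id t).sub_const 1).mul ((hasDerivAt_id t).const_sub T)
      refine this.congr_deriv ?_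
      simp only [hP', id]; ring
    have := lintegral_lagrangian_le hm ha h hV hmin hvar (by simp [hP])
    refine this.trans (le_of_eq (setLIntegral_congr_fun measurableSet_Ioc fun t ht => ?_))
    simp [hG, ht.2]
  have hGm : AEMeasurable (Function.uncurry G) (ν.prod μ) := by
    have h1 : AEMeasurable (fun p : EuclideanSpace ℝ (Fin d) × ℝ => φ' p.2) (ν.prod μ) :=
      (h.integrableOn T).aestronglyMeasurable.aemeasurable.comp_snd
    have h2 : AEMeasurable (fun p : EuclideanSpace ℝ (Fin d) × ℝ => hypCurve a x φ p.2)
        (ν.prod μ) := (aemeasurable_Ioc (h.continuousOn_hypCurve a x T)).comp_snd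
    have hs := continuous_shift (d := d) (m := m) i
    have h3 : AEMeasurable (fun p : EuclideanSpace ℝ (Fin d) × ℝ => P' p.2 • shift m i p.1)
        (ν.prod μ) := by
      have : Continuous fun p : EuclideanSpace ℝ (Fin d) × ℝ => P' p.2 • shift m i p.1 := by
        fun_prop
      exact this.aemeasurable
    have h4 : AEMeasurable (fun p : EuclideanSpace ℝ (Fin d) × ℝ => P p.2 • shift m i p.1)
        (ν.prod μ) := by
      have : Continuous fun p : EuclideanSpace ℝ (Fin d) × ℝ => P p.2 • shift m i p.1 := by
        fun_prop
      exact this.aemeasurable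
    have hq : Measurable fun y : Conf d N => ENNReal.ofReal (minner m y y / 2) := by
      have := (continuous_minner (d := d) m).comp (continuous_id.prodMk continuous_id)
      exact (ENNReal.continuous_ofReal.comp (this.div_const 2)).measurable
    exact (hq.comp_aemeasurable (h1.add h3)).add
      ((measurable_extendedU m).comp_aemeasurable (h2.add h4))
  set D : ℝ → ℝ≥0∞ := J.indicator fun _ => ENNReal.ofReal (1 / (5 * (κ * z))) with hD
  have hDm : Measurable D := measurable_const.indicator measurableSet_Ioc
  have hinner : ∀ t ∈ Ioc 1 T, ∫⁻ s, G s t ∂ν + ENNReal.ofReal (m i * m j) * D t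
      ≤ (ENNReal.ofReal (minner m (φ' t) (φ' t) / 2) + extendedU m (hypCurve a x φ t))
        + ENNReal.ofReal (T ^ 2 * (2 * ∑ l, m l)) * (C * ENNReal.ofReal z) := fun t ht => by
    have hPt : 0 ≤ P t := mul_nonneg (by linarith [ht.1]) (by linarith [ht.2])
    have hDt : (ENNReal.ofReal √(‖hypCurve a x φ t i - hypCurve a x φ t j‖ ^ 2
        + (P t * z) ^ 2))⁻¹ + D t
          ≤ (ENNReal.ofReal ‖hypCurve a x φ t i - hypCurve a x φ t j‖)⁻¹ := by
      by_cases htJ : t ∈ J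
      · simp only [hD, indicator_of_mem htJ]
        refine inv_sqrt_add_le (norm_nonneg _) (hr t htJ ht.1.le) (by positivity) ?_
        refine mul_le_mul_of_nonneg_right ?_ hz.le
        have h1 : κ ≤ t - 1 := by
          have := htJ.1
          linarith
        have h2 : 1 ≤ T - t := by linarith [htJ.2]
        simp only [hP]
        nlinarith
      · simp only [hD, indicator_of_notMem htJ, add_zero]
        refine ENNReal.inv_le_inv.2 (ENNReal.ofReal_le_ofReal ?_)
        exact Real.le_sqrt_of_sq_le (by nlinarith [sq_nonneg (P t * z)])
    have h1 := lintegral_extendedU_shift_le (m := m) hν1 hpot hij (hypCurve a x φ t) hPt hDt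
    have h2 := lintegral_kinetic_shift_le hm hν1 hsymm i (φ' t) (P' t)
    have hkm : Measurable fun s => ENNReal.ofReal
        (minner m (φ' t + P' t • shift m i s) (φ' t + P' t • shift m i s) / 2) := by
      have hs := continuous_shift (d := d) (m := m) i
      have h2 : Continuous fun s => φ' t + P' t • shift m i s := by fun_prop
      have h3 := (continuous_minner m).comp (h2.prodMk h2)
      exact (ENNReal.continuous_ofReal.comp (h3.div_const 2)).measurable
    have h3 : ENNReal.ofReal (P' t ^ 2 * (2 * ∑ l, m l)) * ∫⁻ s, ENNReal.ofReal (‖s‖ ^ 2) ∂ν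
        ≤ ENNReal.ofReal (T ^ 2 * (2 * ∑ l, m l)) * (C * ENNReal.ofReal z) := by
      have hS := (sum_mass_pos hm i).le
      gcongr ENNReal.ofReal (?_ * _) * ?_
      · simp only [hP']
        nlinarith [ht.1, ht.2]
    simp only [hG]
    rw [lintegral_add_left hkm, add_assoc]
    calc _ ≤ (ENNReal.ofReal (minner m (φ' t) (φ' t) / 2)
            + ENNReal.ofReal (T ^ 2 * (2 * ∑ l, m l)) * (C * ENNReal.ofReal z))
            + extendedU m (hypCurve a x φ t) :=
          add_le_add (h2.trans (add_le_add_right h3 _)) h1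
      _ = _ := by ring
  have hmain : A * ν univ + ENNReal.ofReal (m i * m j * K / (5 * κ)) * ENNReal.ofReal z
      ≤ A + B * ENNReal.ofReal z := by
    have e1 : A * ν univ ≤ ∫⁻ t, ∫⁻ s, G s t ∂ν ∂μ := by
      rw [← lintegral_lintegral_swap hGm, ← lintegral_const]
      exact lintegral_mono hAG
    have e2 : ENNReal.ofReal (m i * m j * K / (5 * κ)) * ENNReal.ofReal z
        = ∫⁻ t, ENNReal.ofReal (m i * m j) * D t ∂μ := by
      rw [lintegral_const_mul _ hDm, hD, lintegral_indicator measurableSet_Ioc, hμ,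
        Measure.restrict_restrict measurableSet_Ioc, inter_eq_left.2 hJI, lintegral_const,
        Measure.restrict_apply_univ, hJ, Real.volume_Ioc, ← ENNReal.ofReal_mul (by positivity),
        ← ENNReal.ofReal_mul (by positivity), ← ENNReal.ofReal_mul (by positivity)]
      congr 1
      field_simp
      ring
    calc _ ≤ ∫⁻ t, ∫⁻ s, G s t ∂ν ∂μ + ∫⁻ t, ENNReal.ofReal (m i * m j) * D t ∂μ :=
          add_le_add e1 e2.le
      _ = ∫⁻ t, (∫⁻ s, G s t ∂ν + ENNReal.ofReal (m i * m j) * D t) ∂μ :=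
          (lintegral_add_right _ (hDm.const_mul _)).symm
      _ ≤ ∫⁻ t, ((ENNReal.ofReal (minner m (φ' t) (φ' t) / 2) + extendedU m (hypCurve a x φ t))
        + ENNReal.ofReal (T ^ 2 * (2 * ∑ l, m l)) * (C * ENNReal.ofReal z)) ∂μ :=
          setLIntegral_mono' measurableSet_Ioc hinner
      _ = A + B * ENNReal.ofReal z := by
          rw [lintegral_add_right _ measurable_const, lintegral_const, hB]
          ring
  have hfin : A + ENNReal.ofReal (m i * m j * K / (5 * κ)) * ENNReal.ofReal z
      ≤ A + (B + A * C) * ENNReal.ofReal z := by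
    have h1 : A ≤ A * ν univ + A * C * ENNReal.ofReal z := by
      calc A = A * 1 := (mul_one A).symm
        _ ≤ A * (ν univ + C * ENNReal.ofReal z) := by gcongr
        _ = _ := by ring
    calc _ ≤ (A * ν univ + A * C * ENNReal.ofReal z)
          + ENNReal.ofReal (m i * m j * K / (5 * κ)) * ENNReal.ofReal z := by gcongr
      _ = (A * ν univ + ENNReal.ofReal (m i * m j * K / (5 * κ)) * ENNReal.ofReal z)
          + A * C * ENNReal.ofReal z := by ring
      _ ≤ (A + B * ENNReal.ofReal z) + A * C * ENNReal.ofReal z := by gcongr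
      _ = _ := by ring
  have hle : ENNReal.ofReal (m i * m j * K / (5 * κ)) ≤ B + A * C := by
    have h1 := (ENNReal.add_le_add_iff_left hA.ne).1 hfin
    exact (ENNReal.mul_le_mul_iff_left (by simpa using hz) ENNReal.ofReal_ne_top).1 h1
  have hKval : m i * m j * K / (5 * κ) = (B + A * C).toReal + 1 := by
    rw [hK]
    have := hm i
    have := hm j
    field_simp
  rw [hKval] at hle
  have := (ENNReal.ofReal_le_iff_le_toReal hBtop.ne).1 hle
  linarith

end Minimizer

section Kepler

variable {F : Type*} [NormedAddCommGroup F] [InnerProductSpace ℝ F]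

lemma one_div_norm_add_le {c : ℝ} (hc : 0 < c) {r e : F} (hr : c ≤ ‖r‖) (he : ‖e‖ ≤ c / 2) :
    1 / ‖r + e‖ ≤ 1 / ‖r‖ - ⟪r, e⟫ / ‖r‖ ^ 3 + 3 / c ^ 3 * ‖e‖ ^ 2 := by
  have h1 : ‖r‖ - ‖e‖ ≤ ‖r + e‖ := by
    have := norm_sub_le (r + e) e
    rw [add_sub_cancel_right] at this
    linarith
  have h2 : ‖r + e‖ ≤ ‖r‖ + ‖e‖ := norm_add_le r e
  have h3 : ‖r + e‖ ^ 2 = ‖r‖ ^ 2 + 2 * ⟪r, e⟫ + ‖e‖ ^ 2 := norm_add_sq_real r e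
  set u := ‖r + e‖
  set ρ := ‖r‖
  have hρ : 0 < ρ := hc.trans_le hr
  have hu : c / 2 ≤ u := by linarith
  have hu0 : 0 < u := by linarith
  have hin : ⟪r, e⟫ = (u ^ 2 - ρ ^ 2 - ‖e‖ ^ 2) / 2 := by linarith
  have hsq : (u - ρ) ^ 2 ≤ ‖e‖ ^ 2 := sq_le_sq' (by linarith) (by linarith)
  have hkey : 1 / u = 1 / ρ - ⟪r, e⟫ / ρ ^ 3 - ‖e‖ ^ 2 / (2 * ρ ^ 3)
      + (u - ρ) ^ 2 * (1 / (2 * ρ ^ 3) + 1 / (ρ ^ 2 * u)) := by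
    rw [hin]; field_simp; ring
  have hb : 1 / (2 * ρ ^ 3) + 1 / (ρ ^ 2 * u) ≤ 3 / c ^ 3 := by
    have e1 : 1 / (2 * ρ ^ 3) ≤ 1 / (2 * c ^ 3) := by gcongr
    have e2 : 1 / (ρ ^ 2 * u) ≤ 1 / (c ^ 2 * (c / 2)) := by gcongr
    have e3 : 1 / (2 * c ^ 3) + 1 / (c ^ 2 * (c / 2)) ≤ 3 / c ^ 3 := by
      have : 1 / (2 * c ^ 3) + 1 / (c ^ 2 * (c / 2)) = (5 / 2) / c ^ 3 := by field_simp; norm_num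
      rw [this]; gcongr; norm_num
    linarith
  have h4 : (u - ρ) ^ 2 * (1 / (2 * ρ ^ 3) + 1 / (ρ ^ 2 * u)) ≤ ‖e‖ ^ 2 * (3 / c ^ 3) :=
    mul_le_mul hsq hb (by positivity) (by positivity)
  have h5 : 0 ≤ ‖e‖ ^ 2 / (2 * ρ ^ 3) := by positivity
  rw [hkey]
  linarith

lemma abs_inner_div_norm_cube_sub_le {c : ℝ} (hc : 0 < c) {r s : F} (hr : c ≤ ‖r‖) (hs : c ≤ ‖s‖)
    (e : F) :
    |⟪r, e⟫ / ‖r‖ ^ 3 - ⟪s, e⟫ / ‖s‖ ^ 3| ≤ 4 / c ^ 3 * ‖r - s‖ * ‖e‖ := by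
  have hρ : 0 < ‖r‖ := hc.trans_le hr
  have hσ : 0 < ‖s‖ := hc.trans_le hs
  have h1 : |⟪r - s, e⟫| ≤ ‖r - s‖ * ‖e‖ := abs_real_inner_le_norm _ _
  have h2 : |⟪s, e⟫| ≤ ‖s‖ * ‖e‖ := abs_real_inner_le_norm _ _
  have h3 : |‖s‖ - ‖r‖| ≤ ‖r - s‖ := by
    rw [abs_sub_comm]; exact abs_norm_sub_norm_le r s
  have hsplit : ⟪r, e⟫ / ‖r‖ ^ 3 - ⟪s, e⟫ / ‖s‖ ^ 3 = ⟪r - s, e⟫ * (1 / ‖r‖ ^ 3)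
      + ⟪s, e⟫ * ((‖s‖ - ‖r‖) * ((‖s‖ ^ 2 + ‖r‖ * ‖s‖ + ‖r‖ ^ 2) / (‖r‖ ^ 3 * ‖s‖ ^ 3))) := by
    rw [inner_sub_left]; field_simp; ring
  rw [hsplit]
  have e1 : |⟪r - s, e⟫ * (1 / ‖r‖ ^ 3)| ≤ ‖r - s‖ * ‖e‖ * (1 / c ^ 3) := by
    rw [abs_mul, abs_of_nonneg (a := 1 / ‖r‖ ^ 3) (by positivity)]
    gcongr
  have e2 : |⟪s, e⟫ * ((‖s‖ - ‖r‖) * ((‖s‖ ^ 2 + ‖r‖ * ‖s‖ + ‖r‖ ^ 2) / (‖r‖ ^ 3 * ‖s‖ ^ 3)))|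
      ≤ ‖r - s‖ * ‖e‖ * (3 / c ^ 3) := by
    rw [abs_mul, abs_mul, abs_of_nonneg
      (a := (‖s‖ ^ 2 + ‖r‖ * ‖s‖ + ‖r‖ ^ 2) / (‖r‖ ^ 3 * ‖s‖ ^ 3)) (by positivity)]
    have e3 : ‖s‖ * ((‖s‖ ^ 2 + ‖r‖ * ‖s‖ + ‖r‖ ^ 2) / (‖r‖ ^ 3 * ‖s‖ ^ 3)) ≤ 3 / c ^ 3 := by
      have : ‖s‖ * ((‖s‖ ^ 2 + ‖r‖ * ‖s‖ + ‖r‖ ^ 2) / (‖r‖ ^ 3 * ‖s‖ ^ 3))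
          = 1 / ‖r‖ ^ 3 + 1 / (‖r‖ ^ 2 * ‖s‖) + 1 / (‖r‖ * ‖s‖ ^ 2) := by field_simp
      rw [this]
      have f1 : 1 / ‖r‖ ^ 3 ≤ 1 / c ^ 3 := by gcongr
      have f2 : 1 / (‖r‖ ^ 2 * ‖s‖) ≤ 1 / (c ^ 2 * c) := by gcongr
      have f3 : 1 / (‖r‖ * ‖s‖ ^ 2) ≤ 1 / (c * c ^ 2) := by gcongr
      have f4 : 1 / c ^ 3 + 1 / (c ^ 2 * c) + 1 / (c * c ^ 2) = 3 / c ^ 3 := by field_simp; norm_num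
      linarith
    calc _ ≤ (‖s‖ * ‖e‖) * (‖r - s‖ * ((‖s‖ ^ 2 + ‖r‖ * ‖s‖ + ‖r‖ ^ 2) / (‖r‖ ^ 3 * ‖s‖ ^ 3))) := by
          gcongr
      _ = ‖r - s‖ * ‖e‖ * (‖s‖ * ((‖s‖ ^ 2 + ‖r‖ * ‖s‖ + ‖r‖ ^ 2) / (‖r‖ ^ 3 * ‖s‖ ^ 3))) := by ring
      _ ≤ _ := by gcongr
  refine (abs_add_le _ _).trans ((add_le_add e1 e2).trans (le_of_eq ?_))
  ring

end Kepler

/-- The differential of the Newtonian potential. -/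
def dU (m : Fin N → ℝ) (x e : Conf d N) : ℝ :=
  ∑ i : Fin N, ∑ j : Fin N,
    if i < j then -(m i * m j * (⟪x i - x j, e i - e j⟫ / ‖x i - x j‖ ^ 3)) else 0

section Potential

variable {m : Fin N → ℝ}

lemma dU_add (x e e' : Conf d N) : dU m x (e + e') = dU m x e + dU m x e' := by
  simp only [dU, ← Finset.sum_add_distrib]
  refine Finset.sum_congr rfl fun i _ => Finset.sum_congr rfl fun j _ => ?_
  split_ifs
  · simp only [Pi.add_apply, add_sub_add_comm, inner_add_right]; ring
  · simp

lemma dU_smul (x : Conf d N) (c : ℝ) (e : Conf d N) : dU m x (c • e) = c * dU m x e := by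
  simp only [dU, Finset.mul_sum]
  refine Finset.sum_congr rfl fun i _ => Finset.sum_congr rfl fun j _ => ?_
  split_ifs
  · simp only [Pi.smul_apply, ← smul_sub, inner_smul_right]; ring
  · simp

lemma continuousOn_dU {s : Set ℝ} {c e : ℝ → Conf d N} (hc : ContinuousOn c s)
    (he : ContinuousOn e s) (hcol : ∀ t ∈ s, ¬ collision (c t)) :
    ContinuousOn (fun t => dU m (c t) (e t)) s := by
  unfold dU
  refine continuousOn_finsetSum _ fun i _ => continuousOn_finsetSum _ fun j _ => ?_
  split_ifs with hij
  · refine (continuousOn_const.mul (ContinuousOn.div (by fun_prop) (by fun_prop) ?_)).neg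
    intro t ht
    exact pow_ne_zero _ (norm_ne_zero_iff.2 (sub_ne_zero.2 fun h => hcol t ht ⟨i, j, hij.ne, h⟩))
  · exact continuousOn_const

/-- All mutual distances of `x` are at least `c`. -/
def Separated (c : ℝ) (x : Conf d N) : Prop := ∀ i j, i ≠ j → c ≤ ‖x i - x j‖

lemma norm_sub_apply_le (e : Conf d N) (i j : Fin N) : ‖e i - e j‖ ≤ 2 * ‖e‖ :=
  (norm_sub_le _ _).trans (by linarith [norm_le_pi_norm e i, norm_le_pi_norm e j])

lemma Separated.not_collision_add {c : ℝ} (hc : 0 < c) {x e : Conf d N} (hx : Separated c x)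
    (he : ‖e‖ ≤ c / 4) : ¬ collision (x + e) := by
  rintro ⟨i, j, hij, h⟩
  have h1 := hx i j hij
  have h2 := norm_sub_apply_le e i j
  have h3 : x i - x j = -(e i - e j) := by
    simp only [Pi.add_apply] at h
    rw [sub_eq_iff_eq_add, ← sub_eq_zero]
    rw [← sub_eq_zero] at h
    rw [← h]; abel
  rw [h3, norm_neg] at h1
  linarith

lemma exists_U_add_le (hm : ∀ i, 0 < m i) {c : ℝ} (hc : 0 < c) : ∃ C : ℝ, 0 ≤ C ∧ ∀ x e : Conf d N,
    Separated c x → ‖e‖ ≤ c / 4 → U m (x + e) ≤ U m x + dU m x e + C * ‖e‖ ^ 2 := by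
  refine ⟨∑ i, ∑ j, if i < j then m i * m j * (3 / c ^ 3 * 4) else 0,
    Finset.sum_nonneg fun i _ => Finset.sum_nonneg fun j _ => ?_, fun x e hx he => ?_⟩
  · have := (hm i).le
    have := (hm j).le
    split_ifs <;> positivity
  simp only [U, dU, Finset.sum_mul, ← Finset.sum_add_distrib]
  refine Finset.sum_le_sum fun i _ => Finset.sum_le_sum fun j _ => ?_
  split_ifs with hij
  · have h1 := norm_sub_apply_le e i j
    have h2 := one_div_norm_add_le hc (hx i j hij.ne) (e := e i - e j) (by linarith)
    have h3 := mul_pos (hm i) (hm j)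
    have h4 : ‖e i - e j‖ ^ 2 ≤ 4 * ‖e‖ ^ 2 := by
      have := pow_le_pow_left₀ (norm_nonneg _) h1 2
      nlinarith
    have h5 : 3 / c ^ 3 * ‖e i - e j‖ ^ 2 ≤ 3 / c ^ 3 * (4 * ‖e‖ ^ 2) := by gcongr
    have h6 : (x + e) i - (x + e) j = x i - x j + (e i - e j) := by
      simp only [Pi.add_apply]; abel
    have h7 := mul_le_mul_of_nonneg_left (h2.trans (add_le_add_right h5 _)) h3.le
    rw [h6]
    calc _ = m i * m j * (1 / ‖x i - x j + (e i - e j)‖) := by ring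
      _ ≤ _ := h7
      _ = _ := by ring
  · simp

lemma exists_abs_dU_sub_le (hm : ∀ i, 0 < m i)
    {c : ℝ} (hc : 0 < c) : ∃ K : ℝ, 0 ≤ K ∧ ∀ x y e : Conf d N,
    Separated c x → Separated c y → |dU m x e - dU m y e| ≤ K * ‖x - y‖ * ‖e‖ := by
  refine ⟨∑ i, ∑ j, if i < j then m i * m j * (4 / c ^ 3 * 4) else 0,
    Finset.sum_nonneg fun i _ => Finset.sum_nonneg fun j _ => ?_, fun x y e hx hy => ?_⟩
  · have := (hm i).le
    have := (hm j).le
    split_ifs <;> positivity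
  simp only [dU, Finset.sum_mul, ← Finset.sum_sub_distrib]
  refine (Finset.abs_sum_le_sum_abs _ _).trans (Finset.sum_le_sum fun i _ =>
    (Finset.abs_sum_le_sum_abs _ _).trans (Finset.sum_le_sum fun j _ => ?_))
  split_ifs with hij
  · have h1 := norm_sub_apply_le e i j
    have h1' := norm_sub_apply_le (x - y) i j
    have h2 := abs_inner_div_norm_cube_sub_le hc (hx i j hij.ne) (hy i j hij.ne) (e i - e j)
    have h3 := mul_pos (hm i) (hm j)
    have h6 : (x - y) i - (x - y) j = (x i - x j) - (y i - y j) := by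
      simp only [Pi.sub_apply]; abel
    rw [h6] at h1'
    have h7 : 4 / c ^ 3 * ‖(x i - x j) - (y i - y j)‖ * ‖e i - e j‖
        ≤ 4 / c ^ 3 * (2 * ‖x - y‖) * (2 * ‖e‖) := by gcongr
    have h8 := mul_le_mul_of_nonneg_left (h2.trans h7) h3.le
    rw [neg_sub_neg, ← mul_sub, abs_mul, abs_of_pos h3, abs_sub_comm]
    refine h8.trans (le_of_eq ?_)
    ring
  · simp

end Potential

lemma exists_separated {γ : ℝ → Conf d N} {T : ℝ} (hγ : ContinuousOn γ (Icc 1 T))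
    (hcol : ∀ t ∈ Icc 1 T, ¬ collision (γ t)) :
    ∃ c > 0, ∀ t ∈ Icc 1 T, Separated c (γ t) := by
  have key : ∀ p : Fin N × Fin N, ∃ c > 0, ∀ t ∈ Icc 1 T, p.1 ≠ p.2 →
      c ≤ ‖γ t p.1 - γ t p.2‖ := by
    rintro ⟨i, j⟩
    by_cases hij : i = j
    · exact ⟨1, one_pos, fun t _ h => absurd hij h⟩
    rcases (Icc 1 T).eq_empty_or_nonempty with he | hne
    · exact ⟨1, one_pos, by simp [he]⟩
    obtain ⟨t₀, ht₀, hmin⟩ := isCompact_Icc.exists_isMinOn hne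
      (f := fun t => ‖γ t i - γ t j‖) (by fun_prop)
    refine ⟨‖γ t₀ i - γ t₀ j‖, norm_pos_iff.2 (sub_ne_zero.2 fun h => hcol t₀ ht₀ ⟨i, j, hij, h⟩),
      fun t ht _ => hmin ht⟩
  choose c hc0 hc using key
  obtain ⟨b, hb, hbc⟩ : ∃ b > 0, ∀ p, b ≤ c p := by
    rcases isEmpty_or_nonempty (Fin N × Fin N) with he | hne
    · exact ⟨1, one_pos, fun p => he.elim p⟩
    · obtain ⟨p, hp⟩ := Finite.exists_min c
      exact ⟨c p, hc0 p, hp⟩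
  exact ⟨b, hb, fun t ht i j hij => (hbc (i, j)).trans (hc (i, j) t ht hij)⟩

/-- The first variation on `(1, T)` of the action along the curve `γ` with velocity `φ'`. -/
def firstVariation (m : Fin N → ℝ) (T : ℝ) (γ φ' ξ ξ' : ℝ → Conf d N) : ℝ :=
  ∫ t in Ioc 1 T, (minner m (φ' t) (ξ' t) + dU m (γ t) (ξ t))

section Variation

variable {m : Fin N → ℝ} {T : ℝ} {ξ ξ' ζ ζ' : ℝ → Conf d N}

lemma Variation.add (hm : ∀ i, 0 < m i) (hξ : Variation m T ξ ξ') (hζ : Variation m T ζ ζ') :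
    Variation m T (fun t => ξ t + ζ t) (fun t => ξ' t + ζ' t) := by
  refine ⟨fun t ht => (hξ.inX t ht).add (hζ.inX t ht), hξ.integrableOn.add hζ.integrableOn, ?_,
    fun t ht => ?_, fun t ht => ?_, fun t ht => ?_⟩
  · have hcross := integrable_minner hm hξ.integrableOn.aestronglyMeasurable
      hζ.integrableOn.aestronglyMeasurable hξ.integrableOn_sq hζ.integrableOn_sq
    refine ((hξ.integrableOn_sq.add (hcross.const_mul 2)).add hζ.integrableOn_sq).congr ?_
    filter_upwards with t
    simp only [Pi.add_apply, minner_add_left, minner_add_right, minner_comm m (ζ' t) (ξ' t)]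
    ring
  · rw [integral_add (hξ.integrableOn_Ioc t) (hζ.integrableOn_Ioc t), hξ.eq_integral t ht,
      hζ.eq_integral t ht]
    abel
  · rw [hξ.deriv_eq_zero t ht, hζ.deriv_eq_zero t ht, add_zero]
  · rw [hξ.eq_zero t ht, hζ.eq_zero t ht, add_zero]

lemma Variation.smul (c : ℝ) (hξ : Variation m T ξ ξ') :
    Variation m T (fun t => c • ξ t) (fun t => c • ξ' t) := by
  refine ⟨fun t ht => (hξ.inX t ht).smul c, hξ.integrableOn.smul c, ?_,
    fun t ht => ?_, fun t ht => ?_, fun t ht => ?_⟩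
  · simp only [minner_smul_left, minner_smul_right]
    exact (hξ.integrableOn_sq.const_mul c).const_mul c
  · rw [integral_smul, hξ.eq_integral t ht, smul_add]
  · rw [hξ.deriv_eq_zero t ht, smul_zero]
  · rw [hξ.eq_zero t ht, smul_zero]

variable {γ φ φ' : ℝ → Conf d N}

lemma integrableOn_firstVariation (hm : ∀ i, 0 < m i) (h : InD m 1 ⊤ φ φ')
    (hγ : ContinuousOn γ (Icc 1 T)) (hcol : ∀ t ∈ Icc 1 T, ¬ collision (γ t))
    (hξ : Variation m T ξ ξ') :
    IntegrableOn (fun t => minner m (φ' t) (ξ' t) + dU m (γ t) (ξ t)) (Ioc 1 T) := by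
  refine Integrable.add ?_ ?_
  · exact integrable_minner hm (h.integrableOn T).aestronglyMeasurable
      hξ.integrableOn.aestronglyMeasurable
      ((h.integrableOn_sq hm).mono_set Ioc_subset_Ioi_self) hξ.integrableOn_sq
  · exact (continuousOn_dU hγ (hξ.continuousOn T) hcol).integrableOn_Icc.mono_set
      Ioc_subset_Icc_self

lemma firstVariation_add (hm : ∀ i, 0 < m i) (h : InD m 1 ⊤ φ φ')
    (hγ : ContinuousOn γ (Icc 1 T)) (hcol : ∀ t ∈ Icc 1 T, ¬ collision (γ t))
    (hξ : Variation m T ξ ξ') (hζ : Variation m T ζ ζ') :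
    firstVariation m T γ φ' (fun t => ξ t + ζ t) (fun t => ξ' t + ζ' t)
      = firstVariation m T γ φ' ξ ξ' + firstVariation m T γ φ' ζ ζ' := by
  rw [firstVariation, firstVariation, firstVariation,
    ← integral_add (integrableOn_firstVariation hm h hγ hcol hξ)
      (integrableOn_firstVariation hm h hγ hcol hζ)]
  refine integral_congr_ae (ae_of_all _ fun t => ?_)
  simp only [minner_add_right, dU_add]
  ring

lemma firstVariation_smul (c : ℝ) :
    firstVariation m T γ φ' (fun t => c • ξ t) (fun t => c • ξ' t)
      = c * firstVariation m T γ φ' ξ ξ' := by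
  rw [firstVariation, firstVariation, ← integral_const_mul]
  refine integral_congr_ae (ae_of_all _ fun t => ?_)
  simp only [minner_smul_right, dU_smul]
  ring

end Variation

section Minimizer

variable {m : Fin N → ℝ} {a x : Conf d N} {φ φ' : ℝ → Conf d N} {V : ℝ}

lemma exists_hypInf_add_le_firstVariation (hm : ∀ i, 0 < m i) (ha : ¬ collision a)
    (h : InD m 1 ⊤ φ φ') (hV : hypAction m a x ⊤ φ φ' = (V : EReal)) {T : ℝ} (hT : 1 ≤ T)
    (hcol : ∀ t ∈ Icc 1 T, ¬ collision (hypCurve a x φ t)) :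
    ∃ C : ℝ, 0 ≤ C ∧ ∃ δ > 0, ∀ (ξ ξ' : ℝ → Conf d N) (M : ℝ), Variation m T ξ ξ' →
      (∀ t ∈ Icc 1 T, ‖ξ t‖ ≤ M) → M ≤ δ →
      hypInf m a (x + ξ 1) ⊤ ≤ ((V + (firstVariation m T (hypCurve a x φ) φ' ξ ξ'
        + (∫ t in Ioc 1 T, minner m (ξ' t) (ξ' t)) / 2 + C * M ^ 2) : ℝ) : EReal) := by
  have hγ := h.continuousOn_hypCurve a x T
  obtain ⟨c, hc, hsep⟩ := exists_separated hγ hcol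
  obtain ⟨C, hC0, hC⟩ := exists_U_add_le (d := d) hm hc
  refine ⟨(T - 1) * C, mul_nonneg (by linarith) hC0, c / 4, by positivity,
    fun ξ ξ' M hξ hM hMδ => ?_⟩
  have hnc : ∀ t ∈ Icc 1 T, ¬ collision (hypCurve a x φ t + ξ t) := fun t ht =>
    (hsep t ht).not_collision_add hc ((hM t ht).trans hMδ)
  have hU : IntegrableOn (fun t => U m (hypCurve a x φ t + ξ t)) (Ioc 1 T) := by
    refine IntegrableOn.mono_set (t := Icc 1 T) (ContinuousOn.integrableOn_Icc fun t ht => ?_)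
      Ioc_subset_Icc_self
    exact ContinuousAt.comp_continuousWithinAt (g := U m)
      (f := fun t => hypCurve a x φ t + ξ t) (continuousAt_U m (hnc t ht))
      (hγ.add (hξ.continuousOn T) t ht)
  refine (hypInf_add_le hm ha h hV hξ hU ?_).trans ?_
  · rw [ae_restrict_iff' measurableSet_Ioc]
    exact ae_of_all _ fun t ht => hnc t (Ioc_subset_Icc_self ht)
  rw [EReal.coe_le_coe_iff, firstVariation]
  have hfv := integrableOn_firstVariation hm h hγ hcol hξ
  have hcross : IntegrableOn (fun t => minner m (φ' t) (ξ' t)) (Ioc 1 T) :=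
    integrable_minner hm (h.integrableOn T).aestronglyMeasurable
      hξ.integrableOn.aestronglyMeasurable
      ((h.integrableOn_sq hm).mono_set Ioc_subset_Ioi_self) hξ.integrableOn_sq
  have hconst : (T - 1) * C * M ^ 2 = ∫ _ in Ioc 1 T, C * M ^ 2 := by
    rw [integral_const]
    simp [hT, mul_assoc]
  have hfv2 : IntegrableOn (fun t => minner m (φ' t) (ξ' t) + dU m (hypCurve a x φ t) (ξ t)
      + minner m (ξ' t) (ξ' t) / 2) (Ioc 1 T) := hfv.add (hξ.integrableOn_sq.div_const 2)
  rw [hconst, ← integral_div, ← integral_add hfv (hξ.integrableOn_sq.div_const 2),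
    ← integral_add hfv2 (integrable_const _)]
  refine add_le_add le_rfl ?_
  refine setIntegral_mono_on (((hcross.add (hξ.integrableOn_sq.div_const 2)).add hU).sub
    (integrableOn_U_hypCurve hm ha h hV T))
    (hfv2.add (integrable_const _)) measurableSet_Ioc fun t ht => ?_
  have htI := Ioc_subset_Icc_self ht
  have h1 := hC _ _ (hsep t htI) ((hM t htI).trans hMδ)
  have h2 : C * ‖ξ t‖ ^ 2 ≤ C * M ^ 2 := by
    have := hM t htI
    gcongr
  linarith

lemma exists_norm_le_of_variation {T : ℝ} {ξ ξ' : ℝ → Conf d N} (hξ : Variation m T ξ ξ') :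
    ∃ M > 0, ∀ t ∈ Icc 1 T, ‖ξ t‖ ≤ M := by
  obtain ⟨M, hM⟩ := isCompact_Icc.exists_bound_of_continuousOn (hξ.continuousOn T)
  exact ⟨max M 1, by positivity, fun t ht => (hM t ht).trans (le_max_left _ _)⟩

lemma eq_zero_of_forall_le_mul_add_sq {l q ε₀ : ℝ} (hε₀ : 0 < ε₀)
    (h : ∀ ε, |ε| ≤ ε₀ → 0 ≤ ε * l + q * ε ^ 2) : l = 0 := by
  have hd : HasDerivAt (fun ε : ℝ => ε * l + q * ε ^ 2) l 0 := by
    have := ((hasDerivAt_id (0 : ℝ)).mul_const l).add (((hasDerivAt_id (0 : ℝ)).pow 2).const_mul q)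
    exact this.congr_deriv (by simp)
  refine IsLocalMin.hasDerivAt_eq_zero ?_ hd
  filter_upwards [Metric.closedBall_mem_nhds (0 : ℝ) hε₀] with ε hε
  simpa using h ε (by simpa using hε)

lemma firstVariation_eq_zero (hm : ∀ i, 0 < m i) (ha : ¬ collision a)
    (h : InD m 1 ⊤ φ φ') (hV : hypAction m a x ⊤ φ φ' = (V : EReal))
    (hmin : hypInf m a x ⊤ = (V : EReal)) {T : ℝ} (hT : 1 ≤ T)
    (hcol : ∀ t ∈ Icc 1 T, ¬ collision (hypCurve a x φ t)) {ξ ξ' : ℝ → Conf d N}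
    (hξ : Variation m T ξ ξ') (hξ1 : ξ 1 = 0) :
    firstVariation m T (hypCurve a x φ) φ' ξ ξ' = 0 := by
  obtain ⟨C, hC, δ, hδ, hle⟩ := exists_hypInf_add_le_firstVariation hm ha h hV hT hcol
  obtain ⟨M, hM0, hM⟩ := exists_norm_le_of_variation hξ
  refine eq_zero_of_forall_le_mul_add_sq (ε₀ := δ / M)
    (q := (∫ t in Ioc 1 T, minner m (ξ' t) (ξ' t)) / 2 + C * M ^ 2) (by positivity)
    fun ε hε => ?_
  have hεM : |ε| * M ≤ δ := (le_div_iff₀ hM0).1 hε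
  have := hle _ _ (|ε| * M) (hξ.smul ε) (fun t ht => by
    rw [norm_smul, Real.norm_eq_abs]
    exact mul_le_mul_of_nonneg_left (hM t ht) (abs_nonneg _)) hεM
  simp only [hξ1, smul_zero, add_zero, hmin, EReal.coe_le_coe_iff, firstVariation_smul,
    minner_smul_left, minner_smul_right, integral_const_mul, mul_pow, sq_abs] at this
  linarith

/-- The affine cutoff equal to `1` at time `1` and to `0` from time `T` on, times `w`. -/
def rampVar (T : ℝ) (w : Conf d N) (t : ℝ) : Conf d N :=
  if t ≤ T then ((T - t) / (T - 1)) • w else 0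

/-- The velocity of `rampVar`. -/
def rampVar' (T : ℝ) (w : Conf d N) (t : ℝ) : Conf d N :=
  if t ≤ T then (-1 / (T - 1)) • w else 0

lemma variation_rampVar {T : ℝ} (hT : 1 < T) {w : Conf d N} (hw : inX m w) :
    Variation m T (rampVar T w) (rampVar' T w) :=
  variation_smul (P := fun t => (T - t) / (T - 1)) (P' := fun _ => -1 / (T - 1)) hT.le
    (fun t => ((hasDerivAt_id t).const_sub T).div_const _) continuous_const (by simp) hw

lemma rampVar_one {T : ℝ} (hT : 1 < T) (w : Conf d N) : rampVar T w 1 = w := by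
  have : T - 1 ≠ 0 := by linarith
  simp [rampVar, hT.le, this]

lemma norm_rampVar_le {T : ℝ} (hT : 1 < T) (w : Conf d N) {t : ℝ} (ht : t ∈ Icc 1 T) :
    ‖rampVar T w t‖ ≤ ‖w‖ := by
  have h1 : 0 < T - 1 := by linarith
  rw [rampVar, if_pos ht.2, norm_smul, Real.norm_of_nonneg
    (div_nonneg (by linarith [ht.2]) h1.le)]
  refine mul_le_of_le_one_left (norm_nonneg _) ((div_le_one h1).2 (by linarith [ht.1]))

lemma rampVar_add (T : ℝ) (w w' : Conf d N) :
    rampVar T (w + w') = fun t => rampVar T w t + rampVar T w' t := by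
  funext t; simp only [rampVar]; split_ifs <;> simp

lemma rampVar'_add (T : ℝ) (w w' : Conf d N) :
    rampVar' T (w + w') = fun t => rampVar' T w t + rampVar' T w' t := by
  funext t; simp only [rampVar']; split_ifs <;> simp

lemma rampVar_smul (T c : ℝ) (w : Conf d N) :
    rampVar T (c • w) = fun t => c • rampVar T w t := by
  funext t; simp only [rampVar]; split_ifs <;> simp [smul_comm c]

lemma rampVar'_smul (T c : ℝ) (w : Conf d N) :
    rampVar' T (c • w) = fun t => c • rampVar' T w t := by
  funext t; simp only [rampVar']; split_ifs <;> simp [smul_comm c]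

lemma firstVariation_eq_rampVar (hm : ∀ i, 0 < m i) (ha : ¬ collision a)
    (h : InD m 1 ⊤ φ φ') (hV : hypAction m a x ⊤ φ φ' = (V : EReal))
    (hmin : hypInf m a x ⊤ = (V : EReal)) {T : ℝ} (hT : 1 < T)
    (hcol : ∀ t ∈ Icc 1 T, ¬ collision (hypCurve a x φ t)) {ξ ξ' : ℝ → Conf d N}
    (hξ : Variation m T ξ ξ') :
    firstVariation m T (hypCurve a x φ) φ' ξ ξ'
      = firstVariation m T (hypCurve a x φ) φ' (rampVar T (ξ 1)) (rampVar' T (ξ 1)) := by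
  have hr := (variation_rampVar hT (hξ.inX 1 le_rfl)).smul (-1)
  have h1 := firstVariation_eq_zero hm ha h hV hmin hT.le hcol (hξ.add hm hr)
    (by simp [rampVar_one hT])
  rw [firstVariation_add hm h (h.continuousOn_hypCurve a x T) hcol hξ hr,
    firstVariation_smul] at h1
  linarith

lemma exists_hypInf_add_le_rampVar (hm : ∀ i, 0 < m i) (ha : ¬ collision a)
    (h : InD m 1 ⊤ φ φ') (hV : hypAction m a x ⊤ φ φ' = (V : EReal)) {T : ℝ} (hT : 1 < T)
    (hcol : ∀ t ∈ Icc 1 T, ¬ collision (hypCurve a x φ t)) :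
    ∃ C : ℝ, 0 ≤ C ∧ ∃ δ > 0, ∀ w : Conf d N, inX m w → ‖w‖ ≤ δ →
      hypInf m a (x + w) ⊤ ≤ ((V + (firstVariation m T (hypCurve a x φ) φ'
        (rampVar T w) (rampVar' T w) + C * ‖w‖ ^ 2) : ℝ) : EReal) := by
  obtain ⟨C, hC, δ, hδ, hle⟩ := exists_hypInf_add_le_firstVariation hm ha h hV hT.le hcol
  have hT1 : 0 < T - 1 := by linarith
  have hS : 0 ≤ ∑ i, m i := Finset.sum_nonneg fun i _ => (hm i).le
  refine ⟨(∑ i, m i) / (2 * (T - 1)) + C, by positivity, δ, hδ, fun w hw hwδ => ?_⟩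
  have h1 := hle _ _ ‖w‖ (variation_rampVar hT hw) (fun t ht => norm_rampVar_le hT w ht) hwδ
  rw [rampVar_one hT] at h1
  refine h1.trans (EReal.coe_le_coe_iff.2 ?_)
  have h2 : ∫ t in Ioc 1 T, minner m (rampVar' T w t) (rampVar' T w t)
      = minner m w w / (T - 1) := by
    have : ∀ t ∈ Ioc 1 T, minner m (rampVar' T w t) (rampVar' T w t)
        = minner m w w / (T - 1) ^ 2 := fun t ht => by
      rw [rampVar', if_pos ht.2, minner_smul_left, minner_smul_right]
      field_simp
    rw [setIntegral_congr_fun measurableSet_Ioc this, integral_const]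
    simp only [MeasurableSet.univ, measureReal_restrict_apply, univ_inter, Real.volume_real_Ioc,
      smul_eq_mul]
    rw [max_eq_left hT1.le]
    field_simp
  have h3 := minner_self_le hm w
  have h4 : minner m w w / (T - 1) / 2 ≤ (∑ i, m i) / (2 * (T - 1)) * ‖w‖ ^ 2 := by
    rw [div_div, div_mul_eq_mul_div, mul_comm (T - 1)]
    gcongr
  rw [h2]
  linarith

end Minimizer

lemma sq_setIntegral_Ioc_le {f : ℝ → ℝ} {s t : ℝ} (hst : s ≤ t) (hf : IntegrableOn f (Ioc s t))
    (hf2 : IntegrableOn (fun r => f r ^ 2) (Ioc s t)) :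
    (∫ r in Ioc s t, f r) ^ 2 ≤ (t - s) * ∫ r in Ioc s t, f r ^ 2 := by
  rcases hst.eq_or_lt with rfl | hlt
  · simp
  set R := ∫ r in Ioc s t, f r
  have hL : 0 < t - s := by linarith
  have h0 : 0 ≤ ∫ r in Ioc s t, ((t - s) ^ 2 * f r ^ 2 - 2 * (t - s) * R * f r + R ^ 2) :=
    integral_nonneg fun r => by
      have := sq_nonneg ((t - s) * f r - R)
      show 0 ≤ (t - s) ^ 2 * f r ^ 2 - 2 * (t - s) * R * f r + R ^ 2
      linarith
  have hsub : IntegrableOn (fun r => (t - s) ^ 2 * f r ^ 2 - 2 * (t - s) * R * f r) (Ioc s t) :=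
    (hf2.const_mul _).sub (hf.const_mul _)
  rw [integral_add hsub (integrable_const _), integral_sub (hf2.const_mul _) (hf.const_mul _),
    integral_const_mul, integral_const_mul, integral_const] at h0
  simp only [MeasurableSet.univ, measureReal_restrict_apply, univ_inter, Real.volume_real_Ioc,
    smul_eq_mul, max_eq_left hL.le] at h0
  refine le_of_mul_le_mul_left ?_ hL
  linarith

section Uniqueness

variable {m : Fin N → ℝ} {a x : Conf d N} {δ δ' φ φ' ψ ψ' : ℝ → Conf d N} {V : ℝ}

lemma InD.sub (hm : ∀ i, 0 < m i) (h : InD m 1 ⊤ φ φ') (k : InD m 1 ⊤ ψ ψ') :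
    InD m 1 ⊤ (fun t => φ t - ψ t) (fun t => φ' t - ψ' t) := by
  refine ⟨by simp [h.1, k.1], fun t ht _ => (h.inX ht).sub (k.inX ht), fun t ht _ => ?_,
    fun t _ _ => (h.integrableOn t).sub (k.integrableOn t), ?_⟩
  · rw [integral_sub (h.integrableOn t) (k.integrableOn t), ← h.eq_integral ht, ← k.eq_integral ht]
  · rw [timeSet_top]
    have hloc : ∀ {χ χ' : ℝ → Conf d N}, InD m 1 ⊤ χ χ' →
        AEStronglyMeasurable χ' (volume.restrict (Ioi 1)) := fun {χ χ'} hχ => by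
      have : Ioi (1 : ℝ) = ⋃ n : ℕ, Ioc 1 (n : ℝ) := by
        ext t
        simp only [mem_Ioi, mem_iUnion, mem_Ioc, exists_and_left]
        exact ⟨fun ht => ⟨ht, exists_nat_ge t⟩, fun ht => ht.1⟩
      rw [this, aestronglyMeasurable_iUnion_iff]
      exact fun n => (hχ.integrableOn n).aestronglyMeasurable
    have hcross := integrable_minner hm (hloc h) (hloc k) (h.integrableOn_sq hm)
      (k.integrableOn_sq hm)
    refine (((h.integrableOn_sq hm).sub (hcross.const_mul 2)).add (k.integrableOn_sq hm)).congr ?_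
    filter_upwards with t
    simp only [Pi.add_apply, Pi.sub_apply, mnorm_sq hm, minner_sub_left, minner_sub_right,
      minner_comm m (ψ' t) (φ' t)]
    ring

lemma InD.variation_truncate (hm : ∀ i, 0 < m i) (h : InD m 1 ⊤ δ δ') {s T : ℝ} (hs : 1 ≤ s)
    (hsT : s ≤ T) :
    Variation m T (fun t => if t ≤ s then δ t - δ s else 0) (fun t => if t ≤ s then δ' t else 0) := by
  have hcongr : ∀ t, t ≤ s → ∫ r in Ioc 1 t, (if r ≤ s then δ' r else 0) = ∫ r in Ioc 1 t, δ' r :=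
    fun t ht => setIntegral_congr_fun measurableSet_Ioc fun r hr => if_pos (hr.2.trans ht)
  have hind : (fun t => if t ≤ s then δ' t else 0) = (Iic s).indicator δ' := by
    funext t; simp [indicator]
  have hind2 : (fun t => minner m (if t ≤ s then δ' t else 0) (if t ≤ s then δ' t else 0))
      = (Iic s).indicator fun t => minner m (δ' t) (δ' t) := by
    funext t; by_cases ht : t ≤ s <;> simp [indicator, ht]
  refine ⟨fun t ht => ?_, ?_, ?_, fun t ht => ?_, fun t ht => if_neg (by linarith), fun t ht => ?_⟩
  · split_ifs
    · exact (h.inX ht).sub (h.inX hs)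
    · exact inX_zero
  · rw [hind]
    exact (h.integrableOn T).indicator measurableSet_Iic
  · rw [hind2]
    exact ((h.integrableOn_sq hm).mono_set Ioc_subset_Ioi_self).indicator measurableSet_Iic
  · simp only [hs, if_true, h.1]
    rcases le_or_gt t s with hts | hts
    · rw [if_pos hts, hcongr t hts, h.eq_integral ht]; abel
    · rw [if_neg (not_le.2 hts), setIntegral_Ioc_eq_of_zero (T := s)
        (fun r hr => if_neg (not_le.2 hr)) t hts.le, hcongr s le_rfl, ← h.eq_integral hs]
      simp
  · split_ifs with hts
    · rw [le_antisymm hts (hsT.trans ht), sub_self]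
    · rfl

lemma InD.norm_sub_le (h : InD m 1 ⊤ δ δ') {r s t u : ℝ} (hr : 1 ≤ r) (hrs : r ≤ s) (hst : s ≤ t)
    (htu : t ≤ u) : ‖δ t - δ s‖ ≤ ∫ τ in Ioc r u, ‖δ' τ‖ := by
  rw [← h.integral_Ioc (hr.trans hrs) hst]
  refine (norm_integral_le_integral_norm _).trans (setIntegral_mono_set
    ((h.integrableOn u).mono_set (Ioc_subset_Ioc_left hr)).norm (ae_of_all _ fun _ => norm_nonneg _)
    (Ioc_subset_Ioc hrs htu).eventuallyLE)

/-- Two curves with the same first variation that agree up to time `r` agree slightly longer. -/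
lemma eq_of_firstVariation_eq (hm : ∀ i, 0 < m i) (h : InD m 1 ⊤ φ φ') (k : InD m 1 ⊤ ψ ψ') {T : ℝ}
    (hcolφ : ∀ t ∈ Icc 1 T, ¬ collision (hypCurve a x φ t))
    (hcolψ : ∀ t ∈ Icc 1 T, ¬ collision (hypCurve a x ψ t))
    (heq : ∀ ξ ξ', Variation m T ξ ξ' → firstVariation m T (hypCurve a x φ) φ' ξ ξ'
      = firstVariation m T (hypCurve a x ψ) ψ' ξ ξ') :
    ∃ σ > 0, ∀ r s, 1 ≤ r → r ≤ s → s ≤ T → s ≤ r + σ → (∀ t ∈ Icc 1 r, φ t = ψ t) →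
      ∀ t ∈ Icc 1 s, φ t = ψ t := by
  have hγ := h.continuousOn_hypCurve a x T
  have kγ := k.continuousOn_hypCurve a x T
  obtain ⟨c₁, hc₁, hsep₁⟩ := exists_separated hγ hcolφ
  obtain ⟨c₂, hc₂, hsep₂⟩ := exists_separated kγ hcolψ
  obtain ⟨K, hK0, hK⟩ := exists_abs_dU_sub_le (d := d) hm (lt_min hc₁ hc₂)
  obtain ⟨c, hc, hnorm⟩ := exists_norm_sq_le_minner (d := d) hm
  obtain ⟨σ, hσ, hσ1⟩ : ∃ σ > 0, σ ^ 2 * (c * K) < 1 := by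
    refine ⟨1 / (1 + c * K), by positivity, ?_⟩
    have : 0 ≤ c * K := by positivity
    rw [div_pow, one_pow, div_mul_eq_mul_div, div_lt_one (by positivity)]
    nlinarith
  refine ⟨σ, hσ, fun r s hr hrs hsT hsσ hag => ?_⟩
  have hδ := h.sub hm k
  have hs := hr.trans hrs
  have hδr : φ r - ψ r = 0 := sub_eq_zero.2 (hag r ⟨hr, le_rfl⟩)
  set R := ∫ τ in Ioc r s, ‖φ' τ - ψ' τ‖ with hR
  have hR0 : 0 ≤ R := integral_nonneg fun _ => norm_nonneg _
  have hbound : ∀ t ∈ Icc r s, ‖φ t - ψ t‖ ≤ R := fun t ht => by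
    have := hδ.norm_sub_le hr le_rfl ht.1 ht.2
    rwa [hδr, sub_zero] at this
  have hξ := hδ.variation_truncate hm hs hsT
  set ξ : ℝ → Conf d N := fun t => if t ≤ s then φ t - ψ t - (φ s - ψ s) else 0 with hξdef
  set ξ' : ℝ → Conf d N := fun t => if t ≤ s then φ' t - ψ' t else 0 with hξ'def
  have hEle : ∫ t in Ioc 1 T, minner m (ξ' t) (ξ' t) ≤ (s - r) * (K * R ^ 2) := by
    have h1 := heq ξ ξ' hξ
    rw [firstVariation, firstVariation, ← sub_eq_zero,
      ← integral_sub (integrableOn_firstVariation hm h hγ hcolφ hξ)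
        (integrableOn_firstVariation hm k kγ hcolψ hξ)] at h1
    have hi : IntegrableOn (fun t => dU m (hypCurve a x φ t) (ξ t)
        - dU m (hypCurve a x ψ t) (ξ t)) (Ioc 1 T) :=
      (((continuousOn_dU hγ (hξ.continuousOn T) hcolφ).sub
        (continuousOn_dU kγ (hξ.continuousOn T) hcolψ)).integrableOn_Icc).mono_set
        Ioc_subset_Icc_self
    have h2 : ∫ t in Ioc 1 T, (minner m (ξ' t) (ξ' t) + (dU m (hypCurve a x φ t) (ξ t)
        - dU m (hypCurve a x ψ t) (ξ t))) = 0 := by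
      rw [← h1]
      refine integral_congr_ae (ae_of_all _ fun t => ?_)
      have : minner m (ξ' t) (ξ' t) = minner m (φ' t - ψ' t) (ξ' t) := by
        by_cases ht : t ≤ s <;> simp [hξ'def, ht]
      simp only [this, minner_sub_left]
      ring
    rw [integral_add hξ.integrableOn_sq hi] at h2
    have h3 : -∫ t in Ioc 1 T, (dU m (hypCurve a x φ t) (ξ t) - dU m (hypCurve a x ψ t) (ξ t))
        ≤ ∫ t in Ioc 1 T, (Ioc r s).indicator (fun _ => K * R ^ 2) t := by
      rw [← integral_neg]
      refine setIntegral_mono_on hi.neg ((integrable_const _).indicator measurableSet_Ioc)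
        measurableSet_Ioc fun t ht => ?_
      have htI := Ioc_subset_Icc_self ht
      have h4 := hK (hypCurve a x φ t) (hypCurve a x ψ t) (ξ t)
        (fun i j hij => (min_le_left _ _).trans (hsep₁ t htI i j hij))
        (fun i j hij => (min_le_right _ _).trans (hsep₂ t htI i j hij))
      have h5 : hypCurve a x φ t - hypCurve a x ψ t = φ t - ψ t := by
        simp only [hypCurve]; abel
      rw [h5] at h4
      refine ((neg_le_abs _).trans h4).trans ?_
      by_cases htr : t ≤ r
      · have : t ∉ Ioc r s := fun hh => not_lt.2 htr hh.1
        simp [hag t ⟨htI.1, htr⟩, this]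
      by_cases hts : t ≤ s
      · have hmem : t ∈ Ioc r s := ⟨not_le.1 htr, hts⟩
        rw [indicator_of_mem hmem, sq, ← mul_assoc]
        have h6 := hbound t (Ioc_subset_Icc_self hmem)
        have h7 : ‖ξ t‖ ≤ R := by
          have := hδ.norm_sub_le hr hmem.1.le hts le_rfl
          rw [norm_sub_rev] at this
          simpa [hξdef, hts] using this
        gcongr
      · have : t ∉ Ioc r s := fun hh => hts hh.2
        simp [hξdef, hts, this]
    have h8 : ∫ t in Ioc 1 T, (Ioc r s).indicator (fun _ => K * R ^ 2) t
        = (s - r) * (K * R ^ 2) := by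
      rw [setIntegral_indicator measurableSet_Ioc, inter_eq_right.2 (Ioc_subset_Ioc hr hsT),
        integral_const]
      simp [hrs]
    linarith
  have hsub : Ioc r s ⊆ Ioc 1 T := Ioc_subset_Ioc hr hsT
  have hint := (hδ.integrableOn s).mono_set (Ioc_subset_Ioc_left hr : Ioc r s ⊆ Ioc 1 s)
  have hint2 : IntegrableOn (fun t => minner m (φ' t - ψ' t) (φ' t - ψ' t)) (Ioc r s) :=
    (hδ.integrableOn_sq hm).mono_set fun t ht => lt_of_le_of_lt hr ht.1
  have hsq : IntegrableOn (fun t => ‖φ' t - ψ' t‖ ^ 2) (Ioc r s) := by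
    refine (hint2.const_mul c).mono' (hint.norm.aestronglyMeasurable.pow 2)
      (ae_of_all _ fun t => ?_)
    rw [Real.norm_of_nonneg (by positivity)]
    exact hnorm _
  have hCS : R ^ 2 ≤ (s - r) * ∫ t in Ioc r s, ‖φ' t - ψ' t‖ ^ 2 :=
    sq_setIntegral_Ioc_le hrs hint.norm hsq
  have hle : ∫ t in Ioc r s, ‖φ' t - ψ' t‖ ^ 2 ≤ c * ((s - r) * (K * R ^ 2)) := by
    calc ∫ t in Ioc r s, ‖φ' t - ψ' t‖ ^ 2
        ≤ ∫ t in Ioc r s, c * minner m (φ' t - ψ' t) (φ' t - ψ' t) :=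
          setIntegral_mono_on hsq (hint2.const_mul c) measurableSet_Ioc fun t _ => hnorm _
      _ = c * ∫ t in Ioc r s, minner m (ξ' t) (ξ' t) := by
          rw [integral_const_mul]
          congr 1
          exact setIntegral_congr_fun measurableSet_Ioc fun t ht => by simp [hξ'def, ht.2]
      _ ≤ c * ∫ t in Ioc 1 T, minner m (ξ' t) (ξ' t) := by
          refine mul_le_mul_of_nonneg_left ?_ hc.le
          exact setIntegral_mono_set hξ.integrableOn_sq
            (ae_of_all _ fun t => minner_self_nonneg hm _) hsub.eventuallyLE
      _ ≤ _ := by gcongr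
  have hsr : 0 ≤ s - r := by linarith
  have hR2 : R ^ 2 = 0 := by
    have h1 : R ^ 2 ≤ (s - r) ^ 2 * (c * K) * R ^ 2 :=
      calc R ^ 2 ≤ (s - r) * (c * ((s - r) * (K * R ^ 2))) := hCS.trans (by gcongr)
        _ = _ := by ring
    have h2 : (s - r) ^ 2 * (c * K) ≤ σ ^ 2 * (c * K) := by
      have : s - r ≤ σ := by linarith
      gcongr
    nlinarith [sq_nonneg R]
  have hRz : R = 0 := by simpa using hR2
  intro t ht
  rcases le_total t r with htr | htr
  · exact hag t ⟨ht.1, htr⟩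
  · have := hbound t ⟨htr, ht.2⟩
    rw [hRz] at this
    exact sub_eq_zero.1 (norm_le_zero_iff.1 this)

lemma eq_on_Icc_of_firstVariation_eq (hm : ∀ i, 0 < m i) (h : InD m 1 ⊤ φ φ')
    (k : InD m 1 ⊤ ψ ψ') {T : ℝ} (hT : 1 ≤ T)
    (hcolφ : ∀ t ∈ Icc 1 T, ¬ collision (hypCurve a x φ t))
    (hcolψ : ∀ t ∈ Icc 1 T, ¬ collision (hypCurve a x ψ t))
    (heq : ∀ ξ ξ', Variation m T ξ ξ' → firstVariation m T (hypCurve a x φ) φ' ξ ξ'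
      = firstVariation m T (hypCurve a x ψ) ψ' ξ ξ') :
    ∀ t ∈ Icc 1 T, φ t = ψ t := by
  obtain ⟨σ, hσ, hstep⟩ := eq_of_firstVariation_eq hm h k hcolφ hcolψ heq
  have key : ∀ n : ℕ, ∀ t ∈ Icc 1 (min (1 + n * σ) T), φ t = ψ t := fun n => by
    induction n with
    | zero =>
      intro t ht
      have : t = 1 := le_antisymm (by simpa [hT] using ht.2) ht.1
      rw [this, h.1, k.1]
    | succ n ih =>
      refine hstep (min (1 + n * σ) T) _ (le_min (by simp; positivity) hT) ?_ (min_le_right _ _) ?_ ih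
      · push_cast
        gcongr
        linarith
      · rw [← min_add_add_right]
        push_cast
        exact min_le_min (by linarith) (by linarith)
  intro t ht
  obtain ⟨n, hn⟩ := exists_nat_ge (T / σ)
  refine key n t ⟨ht.1, le_min ?_ ht.2⟩
  have := (div_le_iff₀ hσ).1 hn
  linarith [ht.2]

end Uniqueness

lemma Variation.inD {m : Fin N → ℝ} (hm : ∀ i, 0 < m i) {T : ℝ} {ξ ξ' : ℝ → Conf d N}
    (hξ : Variation m T ξ ξ') : InD m 1 ⊤ (fun t => ξ t - ξ 1) ξ' := by
  refine ⟨sub_self _, fun t ht _ => (hξ.inX t ht).sub (hξ.inX 1 le_rfl), fun t ht _ => ?_,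
    fun t _ _ => hξ.integrableOn_Ioc t, ?_⟩
  · simp only [hξ.eq_integral t ht, add_sub_cancel_left]
  · simp only [timeSet_top, mnorm_sq hm]
    refine (hξ.integrableOn_sq.union (integrableOn_zero.congr_fun (fun t ht => ?_)
      (measurableSet_Ioi (a := T)))).mono_set fun t ht => ?_
    · simp [hξ.deriv_eq_zero t ht]
    · rcases le_or_gt t T with h | h
      · exact Or.inl ⟨ht, h⟩
      · exact Or.inr h

/-- The action has finite infimum unless some pair of bodies of `x` is aligned with the
corresponding pair of `a`. -/
lemma hypInf_ne_top {m : Fin N → ℝ} (hm : ∀ i, 0 < m i) {a x : Conf d N} (ha : inOmega m a)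
    (hx : inX m x) (hax : ∀ i j, i ≠ j → x i - x j ∉ Submodule.span ℝ {a i - a j}) :
    hypInf m a x ⊤ ≠ ⊤ := by
  have hξ : Variation m 2 (rampVar 2 (x - a)) (rampVar' 2 (x - a)) :=
    variation_rampVar (by norm_num) (hx.sub ha.1)
  set φ : ℝ → Conf d N := fun t => rampVar 2 (x - a) t - rampVar 2 (x - a) 1 with hφ
  set φ' : ℝ → Conf d N := rampVar' 2 (x - a) with hφ'
  have hD : InD m 1 ⊤ φ φ' := hξ.inD hm
  have hγ : ∀ t, hypCurve a x φ t = rampVar 2 (x - a) t + t • a := fun t => by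
    simp only [hypCurve, hφ, rampVar_one (by norm_num : (1 : ℝ) < 2)]
    abel
  have hγ_gt : ∀ t, 2 < t → hypCurve a x φ t = t • a := fun t ht => by
    rw [hγ, rampVar, if_neg (not_le.2 ht), zero_add]
  have hcol : ∀ t, 1 ≤ t → ¬ collision (hypCurve a x φ t) := fun t ht => by
    rcases le_or_gt t 2 with h2 | h2
    · rintro ⟨i, j, hij, h⟩
      have h3 : (2 - t) • (x i - x j) + (2 * (t - 1)) • (a i - a j) = 0 := by
        rw [hγ, rampVar, if_pos h2] at h
        simp only [Pi.add_apply, Pi.smul_apply, Pi.sub_apply] at h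
        rw [← sub_eq_zero] at h
        rw [← h]
        norm_num
        module
      rcases h2.eq_or_lt with rfl | h2
      · norm_num [sub_eq_zero] at h3
        exact ha.2 ⟨i, j, hij, h3⟩
      · refine hax i j hij (Submodule.mem_span_singleton.2 ⟨-(2 * (t - 1)) / (2 - t), ?_⟩)
        have h4 : 2 - t ≠ 0 := by linarith
        rw [← smul_right_inj h4, smul_smul, mul_div_cancel₀ _ h4, eq_comm,
          ← sub_eq_zero, ← h3]
        module
    · rw [hγ_gt t h2]
      exact not_collision_smul ha.2 (by linarith)
  have hU : IntegrableOn (fun t => U m (hypCurve a x φ t)) (Ioc 1 2) := by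
    refine IntegrableOn.mono_set (t := Icc 1 2) (ContinuousOn.integrableOn_Icc fun t ht => ?_)
      Ioc_subset_Icc_self
    exact (continuousAt_U m (hcol t ht.1)).comp_continuousWithinAt
      (hD.continuousOn_hypCurve a x 2 t ht)
  have hint : IntegrableOn (hypIntegrand m a x φ φ') (Ioi 1) := by
    rw [← Ioc_union_Ioi_eq_Ioi (one_le_two : (1 : ℝ) ≤ 2)]
    refine IntegrableOn.union ?_ (integrableOn_zero.congr_fun (fun t ht => ?_) measurableSet_Ioi)
    · refine (((hξ.integrableOn_sq.div_const 2).add hU).sub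
        (integrableOn_U_smul m ha.2 2)).congr (ae_of_all _ fun t => ?_)
      simp [hypIntegrand, mnorm_sq hm]
    · simp [hypIntegrand, hγ_gt t ht, mnorm_sq hm, hξ.deriv_eq_zero t ht]
  have hA : hypAction m a x ⊤ φ φ' ≠ ⊤ := by
    rw [hypAction, timeSet_top, if_pos]
    · exact EReal.coe_ne_top _
    · refine ⟨hint, ?_⟩
      rw [ae_restrict_iff' measurableSet_Ioi]
      exact ae_of_all _ fun t ht => hcol t (le_of_lt ht)
  refine ne_top_of_le_ne_top hA ?_
  exact iInf_le_of_le φ (iInf_le_of_le φ' (iInf_le _ hD))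

/-- The mass-weighted sum `x ↦ ∑ i, m i • x i`, as a linear map. -/
def massSum (d : ℕ) (m : Fin N → ℝ) : Conf d N →ₗ[ℝ] EuclideanSpace ℝ (Fin d) :=
  ∑ i, m i • LinearMap.proj i

lemma mem_ker_massSum {m : Fin N → ℝ} {x : Conf d N} :
    x ∈ LinearMap.ker (massSum d m) ↔ inX m x := by
  simp [massSum, inX]

lemma finrank_ker_massSum (hN : 2 ≤ N) {m : Fin N → ℝ} (hm : ∀ i, 0 < m i) :
    Module.finrank ℝ (LinearMap.ker (massSum d m)) = d * (N - 1) := by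
  have hsurj : Function.Surjective (massSum d m) := fun u => by
    have i₀ : Fin N := ⟨0, by omega⟩
    refine ⟨Pi.single i₀ ((m i₀)⁻¹ • u), ?_⟩
    have := (hm i₀).ne'
    simp only [massSum, LinearMap.sum_apply, LinearMap.smul_apply, LinearMap.proj_apply]
    rw [Finset.sum_eq_single i₀ (fun j _ hj => by simp [Pi.single_eq_of_ne hj]) (by simp)]
    simp [this]
  have h := (massSum d m).finrank_range_add_finrank_ker
  rw [LinearMap.range_eq_top.2 hsurj, finrank_top, finrank_euclideanSpace_fin] at h
  have h2 : Module.finrank ℝ (Conf d N) = N * d := by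
    simp [Conf, Module.finrank_pi_fintype]
  rw [h2] at h
  obtain ⟨n, rfl⟩ : ∃ n, N = n + 1 := ⟨N - 1, by omega⟩
  have h3 : (n + 1) * d = d + d * n := by ring
  simp only [Nat.add_sub_cancel]
  omega

/-- The configurations of `X` whose pair `(i, j)` is aligned with that of `a`. -/
def alignedSubmodule (m : Fin N → ℝ) (a : Conf d N) (i j : Fin N) : Submodule ℝ (Conf d N) :=
  LinearMap.ker (massSum d m) ⊓
    (Submodule.span ℝ {a i - a j}).comap (relPos i j).toLinearMap

lemma finrank_alignedSubmodule_lt (hd : 2 ≤ d) {m : Fin N → ℝ} (hm : ∀ i, 0 < m i) (a : Conf d N)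
    {i j : Fin N} (hij : i ≠ j) :
    Module.finrank ℝ (alignedSubmodule m a i j) < Module.finrank ℝ (LinearMap.ker (massSum d m)) := by
  obtain ⟨u, hu⟩ : ∃ u, u ∉ Submodule.span ℝ {a i - a j} := by
    by_contra! hc
    have h1 := finrank_span_le_card (R := ℝ) {a i - a j}
    rw [(Submodule.eq_top_iff'.2 hc), finrank_top, finrank_euclideanSpace_fin] at h1
    simp only [toFinset_singleton, Finset.card_singleton] at h1
    omega
  refine Submodule.finrank_lt_finrank_of_lt (lt_of_le_of_ne inf_le_left fun heq => ?_)
  have hmem : (Pi.single i (m j • u) - Pi.single j (m i • u) : Conf d N)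
      ∈ LinearMap.ker (massSum d m) := by
    rw [mem_ker_massSum, inX]
    simp only [Pi.sub_apply, smul_sub, Finset.sum_sub_distrib]
    rw [Finset.sum_eq_single i (fun l _ hl => by simp [Pi.single_eq_of_ne hl]) (by simp),
      Finset.sum_eq_single j (fun l _ hl => by simp [Pi.single_eq_of_ne hl]) (by simp)]
    simp [smul_smul, mul_comm]
  rw [← heq] at hmem
  have h2 := hmem.2
  simp only [Submodule.mem_comap, SetLike.mem_coe, ContinuousLinearMap.coe_coe, relPos_apply,
    Pi.sub_apply, Pi.single_eq_same, Pi.single_eq_of_ne hij, Pi.single_eq_of_ne hij.symm] at h2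
  have h3 : m j • u - 0 - (0 - m i • u) = (m i + m j) • u := by module
  rw [h3] at h2
  have : m i + m j ≠ 0 := by linarith [hm i, hm j]
  exact hu ((Submodule.smul_mem_iff _ this).1 h2)

section Superdifferential

variable {m : Fin N → ℝ} {a x : Conf d N} {φ φ' : ℝ → Conf d N} {V : ℝ}

lemma exists_superdifferential {F : Type*} [NormedAddCommGroup F] [InnerProductSpace ℝ F]
    [FiniteDimensional ℝ F] (g : F →L[ℝ] Conf d N) (hg : ∀ z, inX m (g z)) (hm : ∀ i, 0 < m i)
    (ha : ¬ collision a) (h : InD m 1 ⊤ φ φ') (hV : hypAction m a x ⊤ φ φ' = (V : EReal)) {T : ℝ}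
    (hT : 1 < T) (hcol : ∀ t ∈ Icc 1 T, ¬ collision (hypCurve a x φ t)) :
    ∃ p : F, (∀ z, ⟪p, z⟫ = firstVariation m T (hypCurve a x φ) φ' (rampVar T (g z))
        (rampVar' T (g z))) ∧
      ∀ ε > 0, ∃ r > 0, ∀ z, ‖z‖ < r →
        hypInf m a (x + g z) ⊤ ≤ ((V + ⟪p, z⟫ + ε * ‖z‖ : ℝ) : EReal) := by
  have : CompleteSpace F := FiniteDimensional.complete ℝ F
  have hγ := h.continuousOn_hypCurve a x T
  let ℓ : F →ₗ[ℝ] ℝ :=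
    { toFun := fun z => firstVariation m T (hypCurve a x φ) φ' (rampVar T (g z)) (rampVar' T (g z))
      map_add' := fun z w => by
        rw [map_add, rampVar_add, rampVar'_add, firstVariation_add hm h hγ hcol
          (variation_rampVar hT (hg z)) (variation_rampVar hT (hg w))]
      map_smul' := fun c z => by
        rw [map_smul, rampVar_smul, rampVar'_smul, firstVariation_smul]
        rfl }
  have hp : ∀ z, ⟪(InnerProductSpace.toDual ℝ F).symm (LinearMap.toContinuousLinearMap ℓ), z⟫
      = firstVariation m T (hypCurve a x φ) φ' (rampVar T (g z)) (rampVar' T (g z)) := fun z => by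
    rw [InnerProductSpace.toDual_symm_apply]
    rfl
  refine ⟨_, hp, fun ε hε => ?_⟩
  obtain ⟨C, hC, δ, hδ, hle⟩ := exists_hypInf_add_le_rampVar hm ha h hV hT hcol
  refine ⟨min (δ / (‖g‖ + 1)) (ε / (C * ‖g‖ ^ 2 + 1)), by positivity, fun z hz => ?_⟩
  have hgz : ‖g z‖ ≤ ‖g‖ * ‖z‖ := g.le_opNorm z
  have h1 : ‖z‖ * (‖g‖ + 1) < δ := (lt_div_iff₀ (by positivity)).1 (hz.trans_le (min_le_left _ _))
  have h2 : ‖z‖ * (C * ‖g‖ ^ 2 + 1) < ε :=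
    (lt_div_iff₀ (by positivity)).1 (hz.trans_le (min_le_right _ _))
  refine (hle (g z) (hg z) (by linarith [norm_nonneg z])).trans (EReal.coe_le_coe_iff.2 ?_)
  rw [hp, ← add_assoc]
  refine add_le_add le_rfl ?_
  calc C * ‖g z‖ ^ 2 ≤ C * (‖g‖ * ‖z‖) ^ 2 := by gcongr
    _ = ‖z‖ * (C * ‖g‖ ^ 2) * ‖z‖ := by ring
    _ ≤ ε * ‖z‖ := by
      gcongr
      linarith [norm_nonneg z]

end Superdifferential

/-- The singular points at which the infimum of the action is finite are covered by countably many
Lipschitz images of a hyperplane. -/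
lemma lipCovered_singularSet_finite (hd : 2 ≤ d) (hN : 2 ≤ N) {m : Fin N → ℝ} (hm : ∀ i, 0 < m i)
    {a : Conf d N} (ha : ¬ collision a) :
    LipCovered (d * (N - 1) - 1) {x ∈ singularSet m a | hypInf m a x ⊤ ≠ ⊤} := by
  have hpos : 0 < d * (N - 1) := Nat.mul_pos (by omega) (by omega)
  obtain ⟨k, hk⟩ : ∃ k, d * (N - 1) = k + 1 := ⟨d * (N - 1) - 1, by omega⟩
  rw [hk, Nat.add_sub_cancel]
  let e : EuclideanSpace ℝ (Fin (k + 1)) ≃ₗ[ℝ] LinearMap.ker (massSum d m) :=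
    LinearEquiv.ofFinrankEq _ _ (by rw [finrank_ker_massSum hN hm, hk, finrank_euclideanSpace_fin])
  let g : EuclideanSpace ℝ (Fin (k + 1)) →L[ℝ] Conf d N :=
    LinearMap.toContinuousLinearMap ((LinearMap.ker (massSum d m)).subtype ∘ₗ e.toLinearMap)
  have hg : ∀ z, inX m (g z) := fun z => mem_ker_massSum.1 (e z).2
  have hg_surj : ∀ w, inX m w → ∃ z, g z = w := fun w hw =>
    ⟨e.symm ⟨w, mem_ker_massSum.2 hw⟩, by simp [g]⟩
  suffices h : LipCovered k (g ⁻¹' {x ∈ singularSet m a | hypInf m a x ⊤ ≠ ⊤}) by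
    refine (h.image g.lipschitz).mono fun x hx => ?_
    obtain ⟨z, rfl⟩ := hg_surj x hx.1.1.1
    exact ⟨z, hx, rfl⟩
  have hfin : ∀ x ∈ {x ∈ singularSet m a | hypInf m a x ⊤ ≠ ⊤},
      hypInf m a x ⊤ = ((hypInf m a x ⊤).toReal : EReal) := by
    rintro x ⟨⟨-, φ, φ', ψ, ψ', -, -, hφ, -⟩, hx⟩
    refine (EReal.coe_toReal hx ?_).symm
    rw [← hφ, hypAction]
    split_ifs
    · exact EReal.coe_ne_bot _
    · exact top_ne_bot
  refine lipCovered_of_two_superdifferentials (by simp) (fun z => (hypInf m a (g z) ⊤).toReal)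
    fun z hz => ?_
  have hV := hfin _ hz
  set V := (hypInf m a (g z) ⊤).toReal
  obtain ⟨⟨hΩ, φ, φ', ψ, ψ', h, k', hφ, hψ, t, ht, hne⟩, -⟩ := hz
  rw [hV] at hφ hψ
  have hT : 1 < max t 2 := lt_max_of_lt_right one_lt_two
  have hcolφ : ∀ s ∈ Icc 1 (max t 2), ¬ collision (hypCurve a (g z) φ s) := fun s hs =>
    not_collision_of_isMin hd hm ha hΩ.2 h hφ hV hs.1
  have hcolψ : ∀ s ∈ Icc 1 (max t 2), ¬ collision (hypCurve a (g z) ψ s) := fun s hs =>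
    not_collision_of_isMin hd hm ha hΩ.2 k' hψ hV hs.1
  obtain ⟨p, hp, hpV⟩ := exists_superdifferential g hg hm ha h hφ hT hcolφ
  obtain ⟨q, hq, hqV⟩ := exists_superdifferential g hg hm ha k' hψ hT hcolψ
  refine ⟨p, q, fun hpq => hne ?_, fun ε hε => ?_⟩
  · refine eq_on_Icc_of_firstVariation_eq hm h k' hT.le hcolφ hcolψ (fun ξ ξ' hξ => ?_) t
      ⟨ht, le_max_left _ _⟩
    obtain ⟨w, hw⟩ := hg_surj _ (hξ.inX 1 le_rfl)
    rw [firstVariation_eq_rampVar hm ha h hφ hV hT hcolφ hξ,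
      firstVariation_eq_rampVar hm ha k' hψ hV hT hcolψ hξ, ← hw, ← hp, ← hq, hpq]
  · obtain ⟨r₁, hr₁, h₁⟩ := hpV ε hε
    obtain ⟨r₂, hr₂, h₂⟩ := hqV ε hε
    refine ⟨min r₁ r₂, lt_min hr₁ hr₂, fun y hy hyz => ?_⟩
    have hy' := hfin _ hy
    have h3 := h₁ (y - z) (hyz.trans_le (min_le_left _ _))
    have h4 := h₂ (y - z) (hyz.trans_le (min_le_right _ _))
    rw [map_sub, add_sub_cancel, hy', EReal.coe_le_coe_iff] at h3 h4
    exact ⟨h3, h4⟩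

/-- **Rectifiability of the singular set** : `Σ` is countably
`H^{d(N−1)−1}`-rectifiable, i.e. there are a set `E` of zero `H^{d(N−1)−1}`-measure and
countably many Lipschitz maps `f_i : ℝ^{d(N−1)−1} → X` with
`Σ ⊆ E ∪ ⋃ i, f_i(ℝ^{d(N−1)−1})`. -/
theorem singular_set_rectifiable {d N : ℕ} (hd : 2 ≤ d) (hN : 2 ≤ N)
    (m : Fin N → ℝ) (hm : ∀ i, 0 < m i)
    (a : Conf d N) (ha : inOmega m a) :
    ∃ E : Set (Conf d N), μH[((d * (N - 1) - 1 : ℕ) : ℝ)] E = 0 ∧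
      ∃ f : ℕ → (EuclideanSpace ℝ (Fin (d * (N - 1) - 1)) → Conf d N),
        (∀ i, ∃ Kf : NNReal, LipschitzWith Kf (f i)) ∧
        singularSet m a ⊆ E ∪ ⋃ i, Set.range (f i) := by
  suffices h : LipCovered (d * (N - 1) - 1) (singularSet m a) by
    obtain ⟨f, hf, hs⟩ := h
    exact ⟨∅, measure_empty, f, hf, by simpa using hs⟩
  have hN' : Nonempty (Fin N) := ⟨⟨0, by omega⟩⟩
  have haligned : LipCovered (d * (N - 1) - 1)
      (⋃ p : Fin N × Fin N, if p.1 = p.2 then ∅ else (alignedSubmodule m a p.1 p.2 : Set (Conf d N))) := by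
    refine LipCovered.iUnion fun p => ?_
    split_ifs with hp
    · exact (lipCovered_submodule (⊥ : Submodule ℝ (Conf d N)) (by simp)).mono (empty_subset _)
    · refine lipCovered_submodule _ ?_
      have := finrank_alignedSubmodule_lt hd hm a hp
      rw [finrank_ker_massSum hN hm] at this
      omega
  refine ((lipCovered_singularSet_finite hd hN hm ha.2).union haligned).mono fun x hx => ?_
  by_cases hax : ∀ i j, i ≠ j → x i - x j ∉ Submodule.span ℝ {a i - a j}
  · exact Or.inl ⟨hx, hypInf_ne_top hm ha hx.1.1 hax⟩
  · push Not at hax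
    obtain ⟨i, j, hij, hmem⟩ := hax
    refine Or.inr (mem_iUnion.2 ⟨(i, j), ?_⟩)
    rw [if_neg hij]
    exact ⟨mem_ker_massSum.2 hx.1.1, hmem⟩

end NBodyHJ
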